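/- arXiv:1601.01211 — 2 statements merged into one kernel-verified Lean document; each statement's English description precedes it below -/
import Mathlib

section
/- Let G be a simple graph with n vertices and e edges, and let c = 2e/n². Then the number N of 4-edge paths in G satisfies N ≤ (1/2)·max( (1−√(1−c))²·((c+1)√(1−c)+c), c^{5/2} )·n⁵. -/
/-- The number of 4-edge walks in `G`: sequences of 5 (not necessarily distinct)
vertices with consecutive vertices adjacent. -/
noncomputable def walkCount4 {V : Type*} (G : SimpleGraph V) : ℕ :=
  Nat.card {f : Fin 5 → V // ∀ i : Fin 4, G.Adj (f i.castSucc) (f i.succ)}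

/-- The number of 4-edge paths in `G` (subgraphs isomorphic to the path with 4 edges):
each such path corresponds to exactly two injective tuples (its two directions). -/
noncomputable def pathCount4 {V : Type*} (G : SimpleGraph V) : ℕ :=
  Nat.card {f : Fin 5 → V //
    Function.Injective f ∧ ∀ i : Fin 4, G.Adj (f i.castSucc) (f i.succ)} / 2

/-!
A Kelmans compression replaces the neighbours that only `v` has by neighbours of `u`. It preserves
the number of edges and, in one of the two directions, does not decrease the number of 4-edge
walks, so the maximum is attained at a threshold graph. A threshold graph is split: a maximum clique
has an independent complement. For a split graph in which each clique vertex carries a loop, the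
number of walks is at most linear in the two sums of squared degrees across the split, and the
maximum of that linear form under the constraints on these sums is a function of the density and
the clique size alone, which is largest at an endpoint: a quasi-star or a clique. The loops change
the density by at most `1 / n`, an error that vanishes on blow-ups of the graph, since blowing up
multiplies edges and walks by fixed powers.
-/

open Matrix

section Matrices

variable {ι κ : Type*}

theorem fromBlocks_one_apply_nonneg [DecidableEq ι] (i j : ι ⊕ κ) :
    0 ≤ fromBlocks (1 : Matrix ι ι ℝ) 0 0 (0 : Matrix κ κ ℝ) i j := by
  rcases i with i | i <;> rcases j with _ | _
  · rw [fromBlocks_apply₁₁, one_apply]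
    positivity
  all_goals exact le_rfl

variable [Fintype κ]

theorem mulVec_nonneg_of_nonneg {A : Matrix ι κ ℝ} {x : κ → ℝ} (hA : ∀ i j, 0 ≤ A i j)
    (hx : 0 ≤ x) : 0 ≤ A *ᵥ x :=
  fun i => dotProduct_nonneg_of_nonneg (hA i) hx

theorem mulVec_le_mulVec_of_nonneg {A B : Matrix ι κ ℝ} {x y : κ → ℝ} (hA : ∀ i j, 0 ≤ A i j)
    (hAB : ∀ i j, A i j ≤ B i j) (hx : 0 ≤ x) (hxy : x ≤ y) : A *ᵥ x ≤ B *ᵥ y :=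
  fun i => Finset.sum_le_sum fun j _ =>
    mul_le_mul (hAB i j) (hxy j) (hx j) ((hA i j).trans (hAB i j))

theorem mulVec_apply_le_one_dotProduct {B : Matrix ι κ ℝ} (hB : ∀ i j, B i j ≤ 1) {x : κ → ℝ}
    (hx : 0 ≤ x) (i : ι) : (B *ᵥ x) i ≤ 1 ⬝ᵥ x :=
  dotProduct_le_dotProduct_of_nonneg_right (hB i) hx

theorem mulVec_one_apply_le {B : Matrix ι κ ℝ} (hB : ∀ i j, B i j ≤ 1) (i : ι) :
    (B *ᵥ 1) i ≤ Fintype.card κ :=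
  (mulVec_apply_le_one_dotProduct hB zero_le_one i).trans_eq (one_dotProduct_one (α := ℝ))

variable [Fintype ι]

/-- The sum of all entries of a matrix; for an adjacency matrix, twice the number of edges. -/
def entrySum (A : Matrix ι κ ℝ) : ℝ :=
  1 ⬝ᵥ A *ᵥ 1

/-- The sum of the squared row sums of a matrix; for an adjacency matrix, the sum of the squared
degrees. -/
def sqRowSum (A : Matrix ι κ ℝ) : ℝ :=
  (A *ᵥ 1) ⬝ᵥ (A *ᵥ 1)

/-- The weighted number of 4-edge walks: each walk is counted at its middle vertex as a pair of
2-edge walks. -/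
def walkSum (A : Matrix ι ι ℝ) : ℝ :=
  (A *ᵥ A *ᵥ 1) ⬝ᵥ (A *ᵥ A *ᵥ 1)

theorem entrySum_add (A B : Matrix ι κ ℝ) : entrySum (A + B) = entrySum A + entrySum B := by
  rw [entrySum, add_mulVec, dotProduct_add, entrySum, entrySum]

theorem dotProduct_self_le_of_le {x : ι → ℝ} {b : ℝ} (hx : 0 ≤ x) (hb : ∀ i, x i ≤ b) :
    x ⬝ᵥ x ≤ b * (1 ⬝ᵥ x) := by
  rw [← smul_eq_mul, ← smul_dotProduct]
  exact dotProduct_le_dotProduct_of_nonneg_right (fun i => by simpa using hb i) hx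

theorem walkSum_le_walkSum {A B : Matrix ι ι ℝ} (hA : ∀ i j, 0 ≤ A i j)
    (hAB : ∀ i j, A i j ≤ B i j) : walkSum A ≤ walkSum B := by
  have hA1 : 0 ≤ A *ᵥ 1 := mulVec_nonneg_of_nonneg hA zero_le_one
  have hA2 : 0 ≤ A *ᵥ A *ᵥ 1 := mulVec_nonneg_of_nonneg hA hA1
  have h2 : A *ᵥ A *ᵥ 1 ≤ B *ᵥ B *ᵥ 1 :=
    mulVec_le_mulVec_of_nonneg hA hAB hA1 (mulVec_le_mulVec_of_nonneg hA hAB zero_le_one le_rfl)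
  exact Finset.sum_le_sum fun i _ => mul_self_le_mul_self (hA2 i) (h2 i)

theorem walkSum_eq_one_dotProduct_pow [DecidableEq ι] {A : Matrix ι ι ℝ} (hA : A.IsSymm) :
    walkSum A = 1 ⬝ᵥ A ^ 4 *ᵥ 1 := by
  simp only [walkSum, pow_succ, pow_zero, one_mul, ← mulVec_mulVec]
  rw [dotProduct_mulVec 1, dotProduct_mulVec (1 ᵥ* A), ← mulVec_transpose, ← mulVec_transpose,
    hA.eq]

theorem sum_mul_prod_eq_dotProduct_pow [DecidableEq ι] (A : Matrix ι ι ℝ) (g : ι → ℝ) (m : ℕ) :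
    ∑ f : Fin (m + 1) → ι, g (f 0) * ∏ i : Fin m, A (f i.castSucc) (f i.succ) =
      g ⬝ᵥ A ^ m *ᵥ 1 := by
  induction m generalizing g with
  | zero =>
    simp only [Finset.univ_eq_empty, Finset.prod_empty, mul_one, pow_zero, one_mulVec,
      dotProduct_one]
    exact (Equiv.funUnique (Fin 1) ι).sum_comp g
  | succ m ih =>
    rw [pow_succ', ← mulVec_mulVec, dotProduct_mulVec, ← ih, ← (Fin.consEquiv fun _ => ι).sum_comp,
      Fintype.sum_prod_type, Finset.sum_comm]
    refine Finset.sum_congr rfl fun f _ => ?_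
    simp only [Fin.consEquiv_apply, Fin.prod_univ_succ, Fin.cons_zero, Fin.cons_succ,
      Fin.castSucc_zero, ← Fin.succ_castSucc, vecMul, dotProduct, Finset.sum_mul, mul_assoc]

section NToOne

variable {f : κ → ι} {N : ℝ}

theorem submatrix_mulVec_comp (hf : ∀ g : ι → ℝ, ∑ j, g (f j) = N * ∑ i, g i)
    (A : Matrix ι ι ℝ) (x : ι → ℝ) : A.submatrix f f *ᵥ (x ∘ f) = (N • A *ᵥ x) ∘ f := by
  ext j
  exact hf fun i => A (f j) i * x i

theorem comp_dotProduct_comp (hf : ∀ g : ι → ℝ, ∑ j, g (f j) = N * ∑ i, g i) (x y : ι → ℝ) :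
    (x ∘ f) ⬝ᵥ (y ∘ f) = N * (x ⬝ᵥ y) :=
  hf fun i => x i * y i

theorem entrySum_submatrix (hf : ∀ g : ι → ℝ, ∑ j, g (f j) = N * ∑ i, g i)
    (A : Matrix ι ι ℝ) : entrySum (A.submatrix f f) = N ^ 2 * entrySum A := by
  have h1 : (1 : κ → ℝ) = (1 : ι → ℝ) ∘ f := rfl
  rw [entrySum, entrySum, h1, submatrix_mulVec_comp hf, comp_dotProduct_comp hf, dotProduct_smul,
    smul_eq_mul]
  ring

theorem walkSum_submatrix (hf : ∀ g : ι → ℝ, ∑ j, g (f j) = N * ∑ i, g i)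
    (A : Matrix ι ι ℝ) : walkSum (A.submatrix f f) = N ^ 5 * walkSum A := by
  have h1 : (1 : κ → ℝ) = (1 : ι → ℝ) ∘ f := rfl
  rw [walkSum, walkSum, h1, submatrix_mulVec_comp hf, submatrix_mulVec_comp hf,
    comp_dotProduct_comp hf, mulVec_smul]
  simp only [dotProduct_smul, smul_dotProduct, smul_eq_mul]
  ring

end NToOne

end Matrices

section Compression

variable {V : Type*} {A : Matrix V V ℝ} {e p q : V → ℝ} {b : ℝ}

/-- The symmetric rank-two update of `A` that adds the weights `q` to the edges at `u` and takes
them off the edges at `v` when `e` is the difference of the indicators of `u` and `v`. -/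
def compress (A : Matrix V V ℝ) (e q : V → ℝ) : Matrix V V ℝ :=
  A + vecMulVec e q + vecMulVec q e

theorem isSymm_compress (hA : A.IsSymm) : (compress A e q).IsSymm := by
  rw [IsSymm, compress, transpose_add, transpose_add, transpose_vecMulVec, transpose_vecMulVec,
    hA.eq, add_right_comm]

variable [Fintype V]

/-- The data of a Kelmans compression of `A` towards `u` away from `v`: `e` is the difference of the
indicators of `u` and `v`, while `p` and `q` indicate the neighbours that only `u`, respectively
only `v`, has, and `b` is the entry of `A` at `(u, v)`. The compressed matrix is
`compress A e q`. -/
structure IsCompression (A : Matrix V V ℝ) (e p q : V → ℝ) (b : ℝ) : Prop where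
  isSymm : A.IsSymm
  dotProduct_one : e ⬝ᵥ 1 = 0
  dotProduct_right : e ⬝ᵥ q = 0
  dotProduct_self : e ⬝ᵥ e = 2
  mulVec_eq : A *ᵥ e = p - q - b • e

theorem compress_mulVec (A : Matrix V V ℝ) (e q x : V → ℝ) :
    compress A e q *ᵥ x = A *ᵥ x + (q ⬝ᵥ x) • e + (e ⬝ᵥ x) • q := by
  simp only [compress, add_mulVec, vecMulVec_mulVec, op_smul_eq_smul]

namespace IsCompression

theorem dotProduct_mulVec_one (h : IsCompression A e p q b) :
    e ⬝ᵥ A *ᵥ 1 = p ⬝ᵥ 1 - q ⬝ᵥ 1 := by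
  rw [dotProduct_mulVec, ← mulVec_transpose, h.isSymm.eq, h.mulVec_eq]
  simp only [sub_dotProduct, smul_dotProduct, h.dotProduct_one, smul_zero, sub_zero]

theorem mulVec_one (h : IsCompression A e p q b) :
    compress A e q *ᵥ 1 = A *ᵥ 1 + (q ⬝ᵥ 1) • e := by
  rw [compress_mulVec, h.dotProduct_one, zero_smul, add_zero]

theorem mulVec_mulVec_one (h : IsCompression A e p q b) :
    compress A e q *ᵥ compress A e q *ᵥ 1 =
      A *ᵥ A *ᵥ 1 + ((q ⬝ᵥ 1) • p + (p ⬝ᵥ 1) • q + (q ⬝ᵥ A *ᵥ 1 - b * (q ⬝ᵥ 1)) • e) := by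
  rw [h.mulVec_one, compress_mulVec, mulVec_add, mulVec_smul, h.mulVec_eq, dotProduct_add,
    dotProduct_add, dotProduct_smul, dotProduct_smul, dotProduct_comm q e, h.dotProduct_right,
    h.dotProduct_self, h.dotProduct_mulVec_one]
  ext x
  simp only [Pi.add_apply, Pi.sub_apply, Pi.smul_apply, smul_eq_mul]
  ring

theorem entrySum_eq (h : IsCompression A e p q b) :
    entrySum (compress A e q) = entrySum A := by
  rw [entrySum, h.mulVec_one, dotProduct_add, dotProduct_smul, dotProduct_comm 1 e,
    h.dotProduct_one, smul_zero, add_zero, entrySum]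

theorem sqRowSum_eq (h : IsCompression A e p q b) :
    sqRowSum (compress A e q) = sqRowSum A + 2 * (p ⬝ᵥ 1) * (q ⬝ᵥ 1) := by
  rw [sqRowSum, h.mulVec_one, sqRowSum]
  simp only [dotProduct_add, add_dotProduct, dotProduct_smul, smul_dotProduct, smul_eq_mul,
    h.dotProduct_self, h.dotProduct_mulVec_one, dotProduct_comm (A *ᵥ 1) e]
  ring

theorem walkSum_le (h : IsCompression A e p q b) (hA : ∀ x y, 0 ≤ A x y) (hp : 0 ≤ p)
    (hq : 0 ≤ q) (hb : b * (q ⬝ᵥ 1) ≤ q ⬝ᵥ A *ᵥ 1) (he : 0 ≤ e ⬝ᵥ A *ᵥ A *ᵥ 1) :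
    walkSum A ≤ walkSum (compress A e q) := by
  have hA2 : 0 ≤ A *ᵥ A *ᵥ 1 :=
    mulVec_nonneg_of_nonneg hA (mulVec_nonneg_of_nonneg hA zero_le_one)
  have hp1 : 0 ≤ p ⬝ᵥ 1 := dotProduct_nonneg_of_nonneg hp zero_le_one
  have hq1 : 0 ≤ q ⬝ᵥ 1 := dotProduct_nonneg_of_nonneg hq zero_le_one
  rw [walkSum, walkSum, h.mulVec_mulVec_one]
  set d₂ := A *ᵥ A *ᵥ 1
  set Δ := (q ⬝ᵥ 1) • p + (p ⬝ᵥ 1) • q + (q ⬝ᵥ A *ᵥ 1 - b * (q ⬝ᵥ 1)) • e with hΔ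
  have hcross : 0 ≤ Δ ⬝ᵥ d₂ := by
    rw [hΔ]
    simp only [add_dotProduct, smul_dotProduct, smul_eq_mul]
    have := dotProduct_nonneg_of_nonneg hp hA2
    have := dotProduct_nonneg_of_nonneg hq hA2
    have := sub_nonneg.2 hb
    positivity
  have hsq : 0 ≤ Δ ⬝ᵥ Δ := Finset.sum_nonneg fun x _ => mul_self_nonneg (Δ x)
  clear_value Δ
  rw [add_dotProduct, dotProduct_add, dotProduct_add, dotProduct_comm d₂ Δ]
  linarith

end IsCompression

end Compression

section SplitMatrices

/-- The constraints met by a split graph with clique size `t`, independent set of size `m` and `α`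
edges between the two, where `R` and `P` are the sums of the squared degrees across, over the
independent set and over the clique respectively. -/
structure IsSplitProfile (t m α R P : ℝ) : Prop where
  clique_nonneg : 0 ≤ t
  indep_nonneg : 0 ≤ m
  edges_nonneg : 0 ≤ α
  edges_le : α ≤ t * m
  indep_sq_le : R ≤ t * α
  clique_sq_le : P ≤ m * α
  add_sq_le : m * R + t * P ≤ α * t * m + α ^ 2

/-- The upper bound for the number of 4-edge walks in a split graph that is linear in `R` and `P`;
the parameters are those of `IsSplitProfile`. -/
def splitWalkBound (t α R P : ℝ) : ℝ :=
  t * (t ^ 2 + α) ^ 2 + 2 * t * α ^ 2 + 3 * (t ^ 2 + α) * R + α * P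

theorem splitWalkBound_smul (s t α R P : ℝ) :
    splitWalkBound (s * t) (s ^ 2 * α) (s ^ 3 * R) (s ^ 3 * P) =
      s ^ 5 * splitWalkBound t α R P := by
  simp only [splitWalkBound]
  ring

theorem IsSplitProfile.smul {t m α R P s : ℝ} (h : IsSplitProfile t m α R P) (hs : 0 ≤ s) :
    IsSplitProfile (s * t) (s * m) (s ^ 2 * α) (s ^ 3 * R) (s ^ 3 * P) where
  clique_nonneg := mul_nonneg hs h.clique_nonneg
  indep_nonneg := mul_nonneg hs h.indep_nonneg
  edges_nonneg := mul_nonneg (sq_nonneg s) h.edges_nonneg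
  edges_le := by linear_combination s ^ 2 * h.edges_le
  indep_sq_le := by linear_combination s ^ 3 * h.indep_sq_le
  clique_sq_le := by linear_combination s ^ 3 * h.clique_sq_le
  add_sq_le := by linear_combination s ^ 4 * h.add_sq_le

variable {ι κ : Type*} [Fintype ι] [Fintype κ] {B : Matrix ι κ ℝ}

theorem entrySum_transpose (B : Matrix ι κ ℝ) : entrySum Bᵀ = entrySum B := by
  rw [entrySum, entrySum, mulVec_transpose, dotProduct_comm, dotProduct_mulVec]

theorem entrySum_nonneg (hB : ∀ i j, 0 ≤ B i j) : 0 ≤ entrySum B :=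
  dotProduct_nonneg_of_nonneg zero_le_one (mulVec_nonneg_of_nonneg hB zero_le_one)

theorem entrySum_le (hB : ∀ i j, B i j ≤ 1) :
    entrySum B ≤ Fintype.card ι * Fintype.card κ := by
  rw [entrySum, one_dotProduct, ← nsmul_eq_mul]
  exact Finset.sum_le_card_nsmul _ _ _ fun i _ => mulVec_one_apply_le hB i

theorem sqRowSum_le (hB0 : ∀ i j, 0 ≤ B i j) (hB1 : ∀ i j, B i j ≤ 1) :
    sqRowSum B ≤ Fintype.card κ * entrySum B :=
  dotProduct_self_le_of_le (mulVec_nonneg_of_nonneg hB0 zero_le_one) (mulVec_one_apply_le hB1)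

theorem sum_card_mul_sub_sq (x : ι → ℝ) :
    ∑ i, (Fintype.card ι * x i - ∑ j, x j) ^ 2 =
      Fintype.card ι * (Fintype.card ι * ∑ i, x i ^ 2 - (∑ i, x i) ^ 2) := by
  have expand (c s y : ℝ) : (c * y - s) ^ 2 = c ^ 2 * y ^ 2 - 2 * c * s * y + s ^ 2 := by ring
  simp only [expand, Finset.sum_add_distrib, Finset.sum_sub_distrib, ← Finset.mul_sum,
    Finset.sum_const, Finset.card_univ, nsmul_eq_mul]
  ring

theorem sqRowSum_eq_sum (B : Matrix ι κ ℝ) : sqRowSum B = ∑ i, (∑ j, B i j) ^ 2 := by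
  simp only [sqRowSum, dotProduct, mulVec, Pi.one_apply, mul_one, ← sq]

theorem entrySum_eq_sum (B : Matrix ι κ ℝ) : entrySum B = ∑ i, ∑ j, B i j := by
  simp only [entrySum, dotProduct, mulVec, Pi.one_apply, mul_one, one_mul]

theorem card_mul_sqRowSum_add_le (hB0 : ∀ i j, 0 ≤ B i j) (hB1 : ∀ i j, B i j ≤ 1) :
    Fintype.card κ * sqRowSum Bᵀ + Fintype.card ι * sqRowSum B ≤
      entrySum B * Fintype.card ι * Fintype.card κ + entrySum B ^ 2 := by
  set t := (Fintype.card ι : ℝ) with ht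
  set m := (Fintype.card κ : ℝ)
  set k : κ → ℝ := fun j => ∑ i, B i j with hk
  have hα : ∑ i, ∑ j, B i j = ∑ j, k j := Finset.sum_comm
  rcases isEmpty_or_nonempty ι with hι | hι
  · simp [sqRowSum_eq_sum, entrySum_eq_sum, ht]
  have ht0 : 0 < t := Nat.cast_pos.2 Fintype.card_pos
  -- After subtracting the column means, apply Cauchy-Schwarz to the rows, and `b ^ 2 ≤ b` to the
  -- columns.
  have hcol (j : κ) : ∑ i, (t * B i j - k j) ^ 2 ≤ t * (t * k j - k j ^ 2) := by
    have hsq : ∑ i, B i j ^ 2 ≤ k j :=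
      Finset.sum_le_sum fun i _ => pow_le_of_le_one (hB0 i j) (hB1 i j) two_ne_zero
    rw [sum_card_mul_sub_sq]
    gcongr
  have hrow (i : ι) : (t * ∑ j, B i j - ∑ j, k j) ^ 2 ≤ m * ∑ j, (t * B i j - k j) ^ 2 := by
    rw [Finset.mul_sum, ← Finset.sum_sub_distrib]
    exact sq_sum_le_card_mul_sum_sq
  have key : t * (t * sqRowSum B - entrySum B ^ 2) ≤
      t * (m * (t * entrySum B - sqRowSum Bᵀ)) := calc
    _ = ∑ i, (t * ∑ j, B i j - ∑ j, k j) ^ 2 := by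
      rw [← hα, sum_card_mul_sub_sq, sqRowSum_eq_sum, entrySum_eq_sum]
    _ ≤ ∑ i, m * ∑ j, (t * B i j - k j) ^ 2 := Finset.sum_le_sum fun i _ => hrow i
    _ = m * ∑ j, ∑ i, (t * B i j - k j) ^ 2 := by rw [← Finset.mul_sum, Finset.sum_comm]
    _ ≤ m * ∑ j, t * (t * k j - k j ^ 2) := by
      gcongr with j
      exact hcol j
    _ = t * (m * (t * entrySum B - sqRowSum Bᵀ)) := by
      rw [← Finset.mul_sum, Finset.sum_sub_distrib, ← Finset.mul_sum, ← hα, entrySum_eq_sum,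
        sqRowSum_eq_sum]
      simp only [transpose_apply, hk]
      ring
  linarith [le_of_mul_le_mul_left key ht0]

theorem isSplitProfile_entrySum (hB0 : ∀ i j, 0 ≤ B i j) (hB1 : ∀ i j, B i j ≤ 1) :
    IsSplitProfile (Fintype.card ι) (Fintype.card κ) (entrySum B) (sqRowSum Bᵀ) (sqRowSum B) where
  clique_nonneg := Nat.cast_nonneg _
  indep_nonneg := Nat.cast_nonneg _
  edges_nonneg := entrySum_nonneg hB0
  edges_le := entrySum_le hB1
  indep_sq_le := by
    rw [← entrySum_transpose]
    exact sqRowSum_le (fun i j => hB0 j i) (fun i j => hB1 j i)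
  clique_sq_le := sqRowSum_le hB0 hB1
  add_sq_le := card_mul_sqRowSum_add_le hB0 hB1

theorem fromBlocks_mulVec_one (B : Matrix ι κ ℝ) :
    fromBlocks (vecMulVec 1 1) B Bᵀ 0 *ᵥ 1 =
      Sum.elim ((Fintype.card ι : ℝ) • 1 + B *ᵥ 1) (Bᵀ *ᵥ 1) := by
  rw [fromBlocks_mulVec, zero_mulVec, add_zero, vecMulVec_mulVec, op_smul_eq_smul,
    Pi.one_comp, Pi.one_comp, one_dotProduct_one]

theorem entrySum_fromBlocks (B : Matrix ι κ ℝ) :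
    entrySum (fromBlocks (vecMulVec 1 1) B Bᵀ 0) = (Fintype.card ι : ℝ) ^ 2 + 2 * entrySum B := by
  have h1 : (1 : ι ⊕ κ → ℝ) = Sum.elim (1 : ι → ℝ) (1 : κ → ℝ) := Sum.elim_one_one.symm
  nth_rw 1 [entrySum]
  rw [fromBlocks_mulVec_one, h1, sumElim_dotProduct_sumElim, dotProduct_add, dotProduct_smul,
    one_dotProduct_one, ← entrySum, ← entrySum, entrySum_transpose, smul_eq_mul]
  ring

theorem entrySum_fromBlocks_one [DecidableEq ι] :
    entrySum (fromBlocks (1 : Matrix ι ι ℝ) 0 0 (0 : Matrix κ κ ℝ)) = Fintype.card ι := by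
  have h1 : (1 : ι ⊕ κ → ℝ) = Sum.elim (1 : ι → ℝ) (1 : κ → ℝ) := Sum.elim_one_one.symm
  rw [entrySum, fromBlocks_mulVec, h1, Sum.elim_comp_inl, sumElim_dotProduct_sumElim, one_mulVec]
  simp only [zero_mulVec, add_zero, dotProduct_zero, one_dotProduct_one]

theorem fromBlocks_mulVec_mulVec_one (B : Matrix ι κ ℝ) :
    fromBlocks (vecMulVec 1 1) B Bᵀ 0 *ᵥ fromBlocks (vecMulVec 1 1) B Bᵀ 0 *ᵥ 1 =
      Sum.elim (((Fintype.card ι : ℝ) ^ 2 + entrySum B) • 1 + B *ᵥ Bᵀ *ᵥ 1)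
        ((Fintype.card ι : ℝ) • Bᵀ *ᵥ 1 + Bᵀ *ᵥ B *ᵥ 1) := by
  rw [fromBlocks_mulVec_one, fromBlocks_mulVec, Sum.elim_comp_inl, Sum.elim_comp_inr,
    vecMulVec_mulVec, op_smul_eq_smul, zero_mulVec, add_zero, mulVec_add, mulVec_smul,
    dotProduct_add, dotProduct_smul, one_dotProduct_one, ← entrySum, smul_eq_mul, ← sq]

theorem walkSum_fromBlocks_le (hB0 : ∀ i j, 0 ≤ B i j) (hB1 : ∀ i j, B i j ≤ 1) :
    walkSum (fromBlocks (vecMulVec 1 1) B Bᵀ 0) ≤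
      splitWalkBound (Fintype.card ι) (entrySum B) (sqRowSum Bᵀ) (sqRowSum B) := by
  have hw : 0 ≤ B *ᵥ 1 := mulVec_nonneg_of_nonneg hB0 zero_le_one
  have hk : 0 ≤ Bᵀ *ᵥ 1 := mulVec_nonneg_of_nonneg (fun i j => hB0 j i) zero_le_one
  have hy : 0 ≤ B *ᵥ Bᵀ *ᵥ 1 := mulVec_nonneg_of_nonneg hB0 hk
  have hz : 0 ≤ Bᵀ *ᵥ B *ᵥ 1 := mulVec_nonneg_of_nonneg (fun i j => hB0 j i) hw
  have hone_y : 1 ⬝ᵥ B *ᵥ Bᵀ *ᵥ 1 = sqRowSum Bᵀ := by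
    rw [dotProduct_mulVec, ← mulVec_transpose, sqRowSum]
  have hone_z : 1 ⬝ᵥ Bᵀ *ᵥ B *ᵥ 1 = sqRowSum B := by
    rw [dotProduct_mulVec, vecMul_transpose, sqRowSum]
  have hy_le : (B *ᵥ Bᵀ *ᵥ 1) ⬝ᵥ (B *ᵥ Bᵀ *ᵥ 1) ≤ entrySum B * sqRowSum Bᵀ := by
    rw [← hone_y, ← entrySum_transpose]
    exact dotProduct_self_le_of_le hy (mulVec_apply_le_one_dotProduct hB1 hk)
  have hz_apply : ∀ j, (Bᵀ *ᵥ B *ᵥ 1) j ≤ entrySum B :=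
    mulVec_apply_le_one_dotProduct (fun i j => hB1 j i) hw
  have hz_le : (Bᵀ *ᵥ B *ᵥ 1) ⬝ᵥ (Bᵀ *ᵥ B *ᵥ 1) ≤ entrySum B * sqRowSum B := by
    rw [← hone_z]
    exact dotProduct_self_le_of_le hz hz_apply
  have hkz_le : (Bᵀ *ᵥ 1) ⬝ᵥ (Bᵀ *ᵥ B *ᵥ 1) ≤ entrySum B * entrySum B :=
    calc (Bᵀ *ᵥ 1) ⬝ᵥ (Bᵀ *ᵥ B *ᵥ 1) ≤ (Bᵀ *ᵥ 1) ⬝ᵥ (entrySum B • 1) :=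
          dotProduct_le_dotProduct_of_nonneg_left (fun j => by simpa using hz_apply j) hk
      _ = entrySum B * entrySum B := by
          rw [dotProduct_smul, dotProduct_comm, ← entrySum, entrySum_transpose, smul_eq_mul]
  rw [walkSum, fromBlocks_mulVec_mulVec_one, sumElim_dotProduct_sumElim, splitWalkBound]
  simp only [add_dotProduct, dotProduct_add, smul_dotProduct, dotProduct_smul, smul_eq_mul,
    one_dotProduct_one, dotProduct_comm (B *ᵥ Bᵀ *ᵥ 1) 1, hone_y,
    dotProduct_comm (Bᵀ *ᵥ B *ᵥ 1) (Bᵀ *ᵥ 1)]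
  rw [← sqRowSum]
  linear_combination hy_le + hz_le + 2 * (Fintype.card ι : ℝ) * hkz_le

end SplitMatrices

section WalkDensity

/-- The asymptotically optimal bound for the number of 4-edge walks in terms of the edge density
`c`, divided by `n ^ 5`: its two branches are the quasi-star and the quasi-complete graph. -/
noncomputable def walkDensityBound (c : ℝ) : ℝ :=
  max ((1 - √(1 - c)) ^ 2 * ((c + 1) * √(1 - c) + c)) (c ^ ((5 : ℝ) / 2))

theorem continuous_walkDensityBound : Continuous walkDensityBound := by
  unfold walkDensityBound
  exact Continuous.max (by fun_prop) (Real.continuous_rpow_const (by norm_num))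

theorem rpow_five_half {c : ℝ} (hc : 0 ≤ c) : c ^ ((5 : ℝ) / 2) = √c ^ 5 := by
  rw [Real.sqrt_eq_rpow, ← Real.rpow_mul_natCast hc]
  norm_num

/-- The value of `splitWalkBound` at the vertex `R = t * α`, `P = α ^ 2 / t` of the polygon cut out
by `IsSplitProfile`, as a function of the density `c = t ^ 2 + 2 * α`. -/
noncomputable def cliqueVertexBound (c t : ℝ) : ℝ :=
  (c ^ 3 + 9 * c ^ 2 * t ^ 2 - c * t ^ 4 - t ^ 6) / (8 * t)

theorem cliqueVertexBound_two_mul_sub_sq {a : ℝ} (ha : a ≠ 0) :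
    cliqueVertexBound (2 * a - a ^ 2) a = a * (2 * a - a ^ 2) ^ 2 + (1 - a) * a ^ 2 := by
  rw [cliqueVertexBound]
  field_simp
  ring

theorem cliqueVertexBound_le_of_nine_mul_sq_le {a t c : ℝ} (ha : 0 < a) (hat : a ≤ t)
    (htc : 9 * t ^ 2 ≤ c) : cliqueVertexBound c t ≤ cliqueVertexBound c a := by
  have ht : 0 < t := ha.trans_le hat
  have hc : 0 ≤ c := (by positivity : 0 ≤ 9 * t ^ 2).trans htc
  have h9 : 9 * (a * t) ≤ c := by linarith [mul_le_mul_of_nonneg_right hat ht.le]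
  rw [cliqueVertexBound, cliqueVertexBound, div_le_div_iff₀ (by positivity) (by positivity)]
  have h1 : 0 ≤ (t - a) * (c ^ 2 * (c - 9 * (a * t))) :=
    mul_nonneg (sub_nonneg.2 hat) (mul_nonneg (sq_nonneg c) (sub_nonneg.2 h9))
  have h3 : 0 ≤ c * (a * t) * (t ^ 3 - a ^ 3) :=
    mul_nonneg (by positivity) (sub_nonneg.2 (pow_le_pow_left₀ ha.le hat 3))
  have h5 : 0 ≤ (a * t) * (t ^ 5 - a ^ 5) :=
    mul_nonneg (by positivity) (sub_nonneg.2 (pow_le_pow_left₀ ha.le hat 5))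
  linear_combination 8 * (h1 + h3 + h5)

theorem cliqueVertexBound_sq_le {t r : ℝ} (ht : 0 < t) (hr : 0 ≤ r) (hrt : r ≤ 3 * t) :
    cliqueVertexBound (r ^ 2) t ≤ r ^ 5 := by
  rw [cliqueVertexBound, div_le_iff₀ (by positivity)]
  have h : 0 ≤ (t - r) ^ 2 * (t ^ 4 + 2 * t ^ 3 * r + 4 * t ^ 2 * r ^ 2 + (6 * t - r) * r ^ 3) := by
    have : 0 ≤ 6 * t - r := by linarith
    positivity
  linear_combination h

theorem cliqueVertexBound_le_max {a t r : ℝ} (ha : 0 < a) (hat : a ≤ t) (hr : 0 ≤ r)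
    (hra : r ^ 2 = 2 * a - a ^ 2) :
    cliqueVertexBound (r ^ 2) t ≤ max (a * (r ^ 2) ^ 2 + (1 - a) * a ^ 2) (r ^ 5) := by
  have ht : 0 < t := ha.trans_le hat
  rcases le_total r (3 * t) with h | h
  · exact le_max_of_le_right (cliqueVertexBound_sq_le ht hr h)
  · refine le_max_of_le_left ?_
    calc cliqueVertexBound (r ^ 2) t ≤ cliqueVertexBound (r ^ 2) a :=
          cliqueVertexBound_le_of_nine_mul_sq_le ha hat (by nlinarith)
      _ = a * (r ^ 2) ^ 2 + (1 - a) * a ^ 2 := by rw [hra, cliqueVertexBound_two_mul_sub_sq ha.ne']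

/-- The value of `splitWalkBound` at the vertex `P = (1 - t) * α`, `R = α ^ 2 / (1 - t)` of the
polygon cut out by `IsSplitProfile`, for `m = 1 - t`. -/
noncomputable def independentVertexBound (t α : ℝ) : ℝ :=
  t * (t ^ 2 + α) ^ 2 + α ^ 2 * (1 + 2 * t ^ 2 + 3 * α) / (1 - t)

theorem independentVertexBound_le {a t α : ℝ} (ha : 0 ≤ a) (hat : a ≤ t) (ht : t ≤ 1 / 4)
    (hα : 0 ≤ α) (hαa : t ^ 2 + 2 * α = 2 * a - a ^ 2) :
    independentVertexBound t α ≤ a * (2 * a - a ^ 2) ^ 2 + (1 - a) * a ^ 2 := by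
  have hm : 0 < 1 - t := by linarith
  obtain ⟨h, rfl⟩ : ∃ h, t = a + h := ⟨t - a, by ring⟩
  have hh : 0 ≤ h := by linarith
  -- Cleared of its denominator, the inequality is divisible by `h ^ 2`.
  have hh2 : h ^ 2 ≤ 2 * a * (1 - (a + h)) := by linear_combination 2 * hα + hαa
  obtain rfl : α = (2 * a - a ^ 2 - (a + h) ^ 2) / 2 := by linarith
  have hlow : h ^ 2 / 4 * (1 + 2 * a + h) ≤ a * (1 - 3 / 2 * a - 2 * h) := by
    have h1 : h ^ 2 / 4 * (1 + 2 * a + h) ≤ 2 * a * (1 - (a + h)) / 4 * (1 + 2 * a + h) := by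
      gcongr
    have h2 : 0 ≤ 1 / 2 - 2 * (a + h) + (a + h) ^ 2 / 2 + a * (a + h) / 2 := by
      have : 0 ≤ 1 / 2 - 2 * (a + h) := by linarith
      positivity
    linear_combination h1 + a * h2
  have hhigh : 0 ≤ a ^ 4 / 2 + a ^ 2 * h + a ^ 3 * h + 3 / 2 * a ^ 2 * h ^ 2 + 3 / 4 * a * h ^ 3 +
      h ^ 4 / 8 := by positivity
  rw [independentVertexBound, ← le_sub_iff_add_le', div_le_iff₀ hm]
  linear_combination h ^ 2 * (hlow + hhigh)

theorem IsSplitProfile.splitWalkBound_le_cliqueVertexBound {t m α R P : ℝ}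
    (h : IsSplitProfile t m α R P) (ht : 0 < t) (hcase : α * m ≤ 3 * (t ^ 2 + α) * t) :
    splitWalkBound t α R P ≤ cliqueVertexBound (t ^ 2 + 2 * α) t := by
  have hα := h.edges_nonneg
  rw [splitWalkBound, cliqueVertexBound, le_div_iff₀ (by positivity)]
  linear_combination 8 * α * h.add_sq_le + 8 * (3 * (t ^ 2 + α) * t - α * m) * h.indep_sq_le

theorem IsSplitProfile.splitWalkBound_le_independentVertexBound {t α R P : ℝ}
    (h : IsSplitProfile t (1 - t) α R P) (ht : t < 1)
    (hcase : 3 * (t ^ 2 + α) * t ≤ α * (1 - t)) :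
    splitWalkBound t α R P ≤ independentVertexBound t α := by
  have hα := h.edges_nonneg
  rw [splitWalkBound, independentVertexBound, ← sub_le_iff_le_add', le_div_iff₀ (sub_pos.2 ht)]
  linear_combination 3 * (t ^ 2 + α) * h.add_sq_le +
    (α * (1 - t) - 3 * (t ^ 2 + α) * t) * h.clique_sq_le

theorem IsSplitProfile.splitWalkBound_le_max {t α R P a r : ℝ}
    (h : IsSplitProfile t (1 - t) α R P) (ha : a ≤ 1) (hr : 0 ≤ r)
    (hra : r ^ 2 = 2 * a - a ^ 2) (hrα : r ^ 2 = t ^ 2 + 2 * α) :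
    splitWalkBound t α R P ≤ max (a * (r ^ 2) ^ 2 + (1 - a) * a ^ 2) (r ^ 5) := by
  have ht := h.clique_nonneg
  have hα := h.edges_nonneg
  have ha0 : 0 ≤ a := by nlinarith [sq_nonneg r]
  have hat : a ≤ t := by
    have : (1 - t) ^ 2 ≤ (1 - a) ^ 2 := by linear_combination hrα - hra + 2 * h.edges_le
    linarith [le_of_sq_le_sq this (sub_nonneg.2 ha)]
  rcases ht.eq_or_lt with rfl | ht0
  · obtain rfl : α = 0 := hα.antisymm' (by linarith [h.edges_le])
    refine le_max_of_le_right ?_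
    simp only [splitWalkBound]
    linarith [pow_nonneg hr 5]
  rcases le_or_gt (α * (1 - t)) (3 * (t ^ 2 + α) * t) with hcase | hcase
  · have ha0' : 0 < a := by
      refine ha0.lt_of_ne ?_
      rintro rfl
      nlinarith
    calc splitWalkBound t α R P ≤ cliqueVertexBound (t ^ 2 + 2 * α) t :=
          h.splitWalkBound_le_cliqueVertexBound ht0 hcase
      _ = cliqueVertexBound (r ^ 2) t := by rw [hrα]
      _ ≤ max (a * (r ^ 2) ^ 2 + (1 - a) * a ^ 2) (r ^ 5) :=
          cliqueVertexBound_le_max ha0' hat hr hra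
  · have ht4 : t ≤ 1 / 4 := by
      by_contra! ht4
      nlinarith [pow_pos ht0 3, mul_nonneg hα (sub_nonneg.2 ht4.le)]
    refine le_max_of_le_left ?_
    rw [hra]
    exact (h.splitWalkBound_le_independentVertexBound (by linarith) hcase.le).trans
      (independentVertexBound_le ha0 hat ht4 hα (hrα.symm.trans hra))

theorem IsSplitProfile.splitWalkBound_le_of_add_eq_one {t m α R P : ℝ}
    (h : IsSplitProfile t m α R P) (htm : t + m = 1) :
    splitWalkBound t α R P ≤ walkDensityBound (t ^ 2 + 2 * α) := by
  obtain rfl : m = 1 - t := by linarith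
  set c := t ^ 2 + 2 * α
  have hα := h.edges_nonneg
  have hc0 : 0 ≤ c := by positivity
  have hc1 : 0 ≤ 1 - c := by nlinarith [h.edges_le, h.indep_nonneg, sq_nonneg (1 - t)]
  have hs := Real.sq_sqrt hc1
  have hr := Real.sq_sqrt hc0
  set s := √(1 - c) with hs_def
  have hmax := h.splitWalkBound_le_max (a := 1 - s) (sub_le_self 1 (Real.sqrt_nonneg _))
    (Real.sqrt_nonneg c) (by linear_combination hr + hs) hr
  rw [walkDensityBound, rpow_five_half hc0, ← hs_def]
  rw [hr] at hmax
  convert hmax using 2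
  linear_combination -(1 - s) * c * hs

theorem IsSplitProfile.splitWalkBound_le {t m α R P : ℝ} (h : IsSplitProfile t m α R P)
    (htm : 0 < t + m) :
    splitWalkBound t α R P ≤ walkDensityBound ((t ^ 2 + 2 * α) / (t + m) ^ 2) * (t + m) ^ 5 := by
  have hle := (h.smul (inv_nonneg.2 htm.le)).splitWalkBound_le_of_add_eq_one
    (by rw [← mul_add, inv_mul_cancel₀ htm.ne'])
  have hdensity :
      ((t + m)⁻¹ * t) ^ 2 + 2 * ((t + m)⁻¹ ^ 2 * α) = (t ^ 2 + 2 * α) / (t + m) ^ 2 := by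
    field_simp
  rwa [splitWalkBound_smul, hdensity, inv_pow, inv_mul_le_iff₀ (by positivity), mul_comm] at hle

end WalkDensity

section Threshold

open SimpleGraph

variable {V : Type*} {G : SimpleGraph V} {u v : V}

open Classical in
/-- The real adjacency matrix, with decidability of adjacency supplied classically. -/
noncomputable def realAdjMatrix (G : SimpleGraph V) : Matrix V V ℝ :=
  G.adjMatrix ℝ

theorem realAdjMatrix_of_adj (h : G.Adj u v) : realAdjMatrix G u v = 1 :=
  if_pos h

theorem realAdjMatrix_of_not_adj (h : ¬G.Adj u v) : realAdjMatrix G u v = 0 :=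
  if_neg h

theorem isAdjMatrix_realAdjMatrix (G : SimpleGraph V) : (realAdjMatrix G).IsAdjMatrix := by
  classical exact G.isAdjMatrix_adjMatrix ℝ

theorem realAdjMatrix_nonneg (G : SimpleGraph V) (u v : V) : 0 ≤ realAdjMatrix G u v := by
  rcases (isAdjMatrix_realAdjMatrix G).zero_or_one u v with h | h <;> simp only [h] <;> norm_num

theorem realAdjMatrix_le_one (G : SimpleGraph V) (u v : V) : realAdjMatrix G u v ≤ 1 := by
  rcases (isAdjMatrix_realAdjMatrix G).zero_or_one u v with h | h <;> simp only [h] <;> norm_num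

theorem realAdjMatrix_toGraph {A : Matrix V V ℝ} (hA : A.IsAdjMatrix) :
    realAdjMatrix hA.toGraph = A := by
  classical
  ext x y
  rcases hA.zero_or_one x y with h | h
  · rw [realAdjMatrix_of_not_adj (by simp [h]), h]
  · rw [realAdjMatrix_of_adj (by simpa using h), h]

/-- The vertices other than `v` that are adjacent to `u` but not to `v`. -/
def privateNeighbors (G : SimpleGraph V) (u v : V) : Set V :=
  {x | G.Adj u x ∧ ¬G.Adj v x ∧ x ≠ v}

/-- A graph is a threshold graph if any two vertices `u` and `v` have nested neighbourhoods, up to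
`u` and `v` themselves. -/
def IsThreshold (G : SimpleGraph V) : Prop :=
  ∀ u v, privateNeighbors G u v = ∅ ∨ privateNeighbors G v u = ∅

open Classical in
/-- The direction `e` of the compression of a graph towards `u` away from `v`. -/
noncomputable def compressionDir (u v : V) : V → ℝ :=
  Pi.single u 1 - Pi.single v 1

/-- The indicator function of `privateNeighbors`. -/
noncomputable def privateIndicator (G : SimpleGraph V) (u v : V) : V → ℝ :=
  (privateNeighbors G u v).indicator 1

theorem privateIndicator_nonneg (G : SimpleGraph V) (u v : V) : 0 ≤ privateIndicator G u v :=
  fun _ => Set.indicator_nonneg (fun _ _ => zero_le_one) _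

theorem privateIndicator_of_mem {x : V} (h : x ∈ privateNeighbors G u v) :
    privateIndicator G u v x = 1 :=
  Set.indicator_of_mem h 1

theorem privateIndicator_of_notMem {x : V} (h : x ∉ privateNeighbors G u v) :
    privateIndicator G u v x = 0 :=
  Set.indicator_of_notMem h 1

theorem left_notMem_privateNeighbors (G : SimpleGraph V) (u v : V) :
    u ∉ privateNeighbors G u v :=
  fun h => h.1.ne rfl

theorem right_notMem_privateNeighbors (G : SimpleGraph V) (u v : V) :
    v ∉ privateNeighbors G u v :=
  fun h => h.2.2 rfl

theorem isAdjMatrix_compress (G : SimpleGraph V) (huv : u ≠ v) :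
    (compress (realAdjMatrix G) (compressionDir u v) (privateIndicator G v u)).IsAdjMatrix := by
  classical
  -- Only the entries at `{u, x}` and `{v, x}` with `x` private to `v` change: they are `0` and `1`
  -- before the compression and become `1` and `0`.
  have hentry (x y : V) :
      (realAdjMatrix G x y + compressionDir u v x * privateIndicator G v u y +
        privateIndicator G v u x * compressionDir u v y = 0 ∨
      realAdjMatrix G x y + compressionDir u v x * privateIndicator G v u y +
        privateIndicator G v u x * compressionDir u v y = 1) ∧
      realAdjMatrix G x x + compressionDir u v x * privateIndicator G v u x +
        privateIndicator G v u x * compressionDir u v x = 0 := by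
    simp only [compressionDir, privateIndicator, realAdjMatrix, adjMatrix_apply,
      Set.indicator_apply, privateNeighbors, Set.mem_ofPred_eq, Pi.sub_apply, Pi.single_apply,
      Pi.one_apply]
    have hsymm := G.adj_comm
    have hirrefl (w : V) : ¬G.Adj w w := G.irrefl
    grind
  exact ⟨fun x y => (hentry x y).1, isSymm_compress (isAdjMatrix_realAdjMatrix G).symm,
    fun x => (hentry x x).2⟩

variable [Fintype V]

theorem compressionDir_dotProduct (u v : V) (x : V → ℝ) : compressionDir u v ⬝ᵥ x = x u - x v := by
  classical
  rw [compressionDir, sub_dotProduct, single_one_dotProduct, single_one_dotProduct]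

theorem privateIndicator_dotProduct_one_pos (h : (privateNeighbors G u v).Nonempty) :
    0 < privateIndicator G u v ⬝ᵥ 1 := by
  obtain ⟨x, hx⟩ := h
  rw [dotProduct_one]
  exact Finset.sum_pos' (fun y _ => privateIndicator_nonneg G u v y)
    ⟨x, Finset.mem_univ x, by rw [privateIndicator_of_mem hx]; exact one_pos⟩

theorem isCompression_realAdjMatrix (G : SimpleGraph V) (huv : u ≠ v) :
    IsCompression (realAdjMatrix G) (compressionDir u v) (privateIndicator G u v)
      (privateIndicator G v u) (realAdjMatrix G u v) where
  isSymm := (isAdjMatrix_realAdjMatrix G).symm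
  dotProduct_one := by rw [compressionDir_dotProduct, Pi.one_apply, Pi.one_apply, sub_self]
  dotProduct_right := by
    rw [compressionDir_dotProduct, privateIndicator_of_notMem (left_notMem_privateNeighbors G v u),
      privateIndicator_of_notMem (right_notMem_privateNeighbors G v u), sub_self]
  dotProduct_self := by
    classical
    rw [compressionDir_dotProduct]
    simp only [compressionDir, Pi.sub_apply, Pi.single_eq_same, Pi.single_eq_of_ne huv,
      Pi.single_eq_of_ne huv.symm]
    norm_num
  mulVec_eq := by
    classical
    ext x
    simp only [compressionDir, mulVec_sub, mulVec_single_one, privateIndicator, realAdjMatrix,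
      adjMatrix_apply, Set.indicator_apply, privateNeighbors, Set.mem_ofPred_eq, Pi.sub_apply,
      Pi.single_apply, Pi.one_apply, Pi.smul_apply, smul_eq_mul, col_apply]
    have hsymm := G.adj_comm
    have hirrefl (w : V) : ¬G.Adj w w := G.irrefl
    grind

theorem mul_privateIndicator_dotProduct_one_le (G : SimpleGraph V) (u v : V) :
    realAdjMatrix G u v * (privateIndicator G v u ⬝ᵥ 1) ≤
      privateIndicator G v u ⬝ᵥ realAdjMatrix G *ᵥ 1 := by
  have hq := privateIndicator_nonneg G v u
  refine (mul_le_of_le_one_left (dotProduct_nonneg_of_nonneg hq zero_le_one)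
    (realAdjMatrix_le_one G u v)).trans (Finset.sum_le_sum fun x _ => ?_)
  by_cases hx : x ∈ privateNeighbors G v u
  · refine mul_le_mul_of_nonneg_left ?_ (hq x)
    calc (1 : ℝ) = realAdjMatrix G x v := (realAdjMatrix_of_adj hx.1.symm).symm
      _ ≤ ∑ y, realAdjMatrix G x y :=
          Finset.single_le_sum (fun y _ => realAdjMatrix_nonneg G x y) (Finset.mem_univ v)
      _ = (realAdjMatrix G *ᵥ 1) x := by simp only [mulVec, dotProduct_one]
  · rw [privateIndicator_of_notMem hx, zero_mul, zero_mul]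

theorem exists_compression (hu : (privateNeighbors G u v).Nonempty)
    (hv : (privateNeighbors G v u).Nonempty)
    (huv : (realAdjMatrix G *ᵥ realAdjMatrix G *ᵥ 1) v ≤
      (realAdjMatrix G *ᵥ realAdjMatrix G *ᵥ 1) u) :
    ∃ K : SimpleGraph V, entrySum (realAdjMatrix K) = entrySum (realAdjMatrix G) ∧
      walkSum (realAdjMatrix G) ≤ walkSum (realAdjMatrix K) ∧
      sqRowSum (realAdjMatrix G) < sqRowSum (realAdjMatrix K) := by
  have hne : u ≠ v := by
    rintro rfl
    obtain ⟨x, hx⟩ := hu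
    exact hx.2.1 hx.1
  have h := isCompression_realAdjMatrix G hne
  refine ⟨(isAdjMatrix_compress G hne).toGraph, ?_⟩
  rw [realAdjMatrix_toGraph, h.entrySum_eq, h.sqRowSum_eq]
  refine ⟨rfl, h.walkSum_le (realAdjMatrix_nonneg G) (privateIndicator_nonneg G u v)
    (privateIndicator_nonneg G v u) (mul_privateIndicator_dotProduct_one_le G u v) ?_, ?_⟩
  · rw [compressionDir_dotProduct]
    exact sub_nonneg.2 huv
  · have := privateIndicator_dotProduct_one_pos hu
    have := privateIndicator_dotProduct_one_pos hv
    exact lt_add_of_pos_right _ (by positivity)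

theorem exists_isThreshold_walkSum_le (G : SimpleGraph V) :
    ∃ H : SimpleGraph V, IsThreshold H ∧
      entrySum (realAdjMatrix H) = entrySum (realAdjMatrix G) ∧
      walkSum (realAdjMatrix G) ≤ walkSum (realAdjMatrix H) := by
  have : Nonempty {H : SimpleGraph V // entrySum (realAdjMatrix H) = entrySum (realAdjMatrix G)} :=
    ⟨⟨G, rfl⟩⟩
  -- Ties in the number of walks are broken by the sum of the squared degrees, which a compression
  -- strictly increases.
  obtain ⟨⟨H, hH⟩, hmax⟩ := Finite.exists_max
    fun H : {H : SimpleGraph V // entrySum (realAdjMatrix H) = entrySum (realAdjMatrix G)} =>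
      toLex (walkSum (realAdjMatrix H.1), sqRowSum (realAdjMatrix H.1))
  simp only [Prod.Lex.toLex_le_toLex] at hmax
  have hopt (K : SimpleGraph V) (hK : entrySum (realAdjMatrix K) = entrySum (realAdjMatrix H))
      (hwalk : walkSum (realAdjMatrix H) ≤ walkSum (realAdjMatrix K)) :
      sqRowSum (realAdjMatrix K) ≤ sqRowSum (realAdjMatrix H) :=
    (hmax ⟨K, hK.trans hH⟩).elim (fun h => absurd h hwalk.not_gt) And.right
  refine ⟨H, fun u v => ?_, hH, (hmax ⟨G, rfl⟩).elim le_of_lt fun h => h.1.le⟩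
  by_contra! hne
  rcases le_total ((realAdjMatrix H *ᵥ realAdjMatrix H *ᵥ 1) v)
    ((realAdjMatrix H *ᵥ realAdjMatrix H *ᵥ 1) u) with h | h
  · obtain ⟨K, hK, hwalk, hlt⟩ := exists_compression hne.1 hne.2 h
    exact (hopt K hK hwalk).not_gt hlt
  · obtain ⟨K, hK, hwalk, hlt⟩ := exists_compression hne.2 hne.1 h
    exact (hopt K hK hwalk).not_gt hlt

end Threshold

section SplitGraph

open SimpleGraph

variable {V : Type*} {G : SimpleGraph V}

theorem exists_mem_not_adj_of_isMaximumClique [Finite V] {T : Finset V}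
    (hT : G.IsMaximumClique T) {x : V} (hx : x ∉ T) : ∃ p ∈ T, ¬G.Adj x p := by
  classical
  by_contra! h
  have hcard := hT.maximum (insert x T) <| by
    rw [Finset.coe_insert]
    exact hT.isClique.insert fun p hp _ => h p hp
  rw [Finset.card_insert_of_notMem hx] at hcard
  exact Nat.not_succ_le_self _ hcard

theorem IsThreshold.adj_of_isClique (hG : IsThreshold G) {T : Set V} (hT : G.IsClique T)
    {x y p z : V} (hy : y ∉ T) (hxy : G.Adj x y) (hp : p ∈ T) (hxp : ¬G.Adj x p) (hx : x ∉ T)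
    (hz : z ∈ T) (hzp : z ≠ p) : G.Adj y z := by
  by_contra hyz
  have hy_private : y ∈ privateNeighbors G x z :=
    ⟨hxy, fun h => hyz h.symm, fun h => hy (h ▸ hz)⟩
  have hp_private : p ∈ privateNeighbors G z x := ⟨hT hz hp hzp, hxp, fun h => hx (h ▸ hp)⟩
  rcases hG x z with h | h
  · exact Set.eq_empty_iff_forall_notMem.1 h y hy_private
  · exact Set.eq_empty_iff_forall_notMem.1 h p hp_private

theorem IsThreshold.isIndepSet_compl (hG : IsThreshold G) [Finite V] {T : Finset V}
    (hT : G.IsMaximumClique T) : G.IsIndepSet (T : Set V)ᶜ := by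
  classical
  -- Adjacent vertices `x` and `y` outside `T` miss the same single vertex of `T`; exchanging it for
  -- both of them would give a larger clique.
  intro x hx y hy _ hxy
  have hx : x ∉ T := hx
  have hy : y ∉ T := hy
  obtain ⟨p, hp, hxp⟩ := exists_mem_not_adj_of_isMaximumClique hT hx
  obtain ⟨p', hp', hyp⟩ := exists_mem_not_adj_of_isMaximumClique hT hy
  have hadj_y {z : V} (hz : z ∈ T) (hzp : z ≠ p) : G.Adj y z :=
    hG.adj_of_isClique hT.isClique hy hxy hp hxp hx hz hzp
  obtain rfl : p' = p := by
    by_contra hne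
    exact hyp (hadj_y hp' hne)
  have hadj_x {z : V} (hz : z ∈ T) (hzp : z ≠ p') : G.Adj x z :=
    hG.adj_of_isClique hT.isClique hx hxy.symm hp hyp hy hz hzp
  have hclique : G.IsClique (insert x (insert y (T.erase p')) : Finset V) := by
    rw [Finset.coe_insert, Finset.coe_insert]
    refine ((hT.isClique.subset (Finset.erase_subset p' T)).insert fun z hz _ => ?_).insert
      fun z hz _ => ?_
    · exact hadj_y (Finset.mem_of_mem_erase hz) (Finset.ne_of_mem_erase hz)
    · rcases hz with rfl | hz
      · exact hxy
      · exact hadj_x (Finset.mem_of_mem_erase hz) (Finset.ne_of_mem_erase hz)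
  have hcard := hT.maximum _ hclique
  rw [Finset.card_insert_of_notMem (by simp [hxy.ne, hx]),
    Finset.card_insert_of_notMem (by simp [hy]), Finset.card_erase_add_one hp] at hcard
  exact Nat.not_succ_le_self _ hcard

theorem realAdjMatrix_submatrix_add_fromBlocks_one [DecidableEq V] {T : Set V} (hT : G.IsClique T)
    (hTc : G.IsIndepSet Tᶜ) :
    (realAdjMatrix G).submatrix (Sum.elim (Subtype.val : T → V) (Subtype.val : ↥Tᶜ → V))
        (Sum.elim (Subtype.val : T → V) (Subtype.val : ↥Tᶜ → V)) + fromBlocks 1 0 0 0 =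
      fromBlocks (vecMulVec 1 1) ((realAdjMatrix G).submatrix Subtype.val Subtype.val)
        ((realAdjMatrix G).submatrix Subtype.val Subtype.val)ᵀ 0 := by
  ext (i | i) (j | j)
  · rcases eq_or_ne i j with rfl | hij
    · simp [realAdjMatrix_of_not_adj G.irrefl]
    · simp [realAdjMatrix_of_adj (hT i.2 j.2 (Subtype.coe_ne_coe.2 hij)), hij]
  · simp
  · simp [(isAdjMatrix_realAdjMatrix G).symm.apply]
  · rcases eq_or_ne i j with rfl | hij
    · simp [realAdjMatrix_of_not_adj G.irrefl]
    · simp [realAdjMatrix_of_not_adj (hTc i.2 j.2 (Subtype.coe_ne_coe.2 hij))]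

variable [Fintype V]

theorem exists_isSplitProfile_of_isClique {T : Set V} (hT : G.IsClique T)
    (hTc : G.IsIndepSet Tᶜ) :
    ∃ t m α R P, IsSplitProfile t m α R P ∧ t + m = Fintype.card V ∧
      entrySum (realAdjMatrix G) + t = t ^ 2 + 2 * α ∧
      walkSum (realAdjMatrix G) ≤ splitWalkBound t α R P := by
  classical
  set f : T ⊕ ↥Tᶜ → V := Sum.elim Subtype.val Subtype.val
  set B : Matrix T ↥Tᶜ ℝ := (realAdjMatrix G).submatrix Subtype.val Subtype.val
  have hB0 (i j) : 0 ≤ B i j := realAdjMatrix_nonneg G _ _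
  have hB1 (i j) : B i j ≤ 1 := realAdjMatrix_le_one G _ _
  have hsum (g : V → ℝ) : ∑ i, g (f i) = 1 * ∑ x, g x := by
    rw [one_mul]
    exact (Equiv.Set.sumCompl T).sum_comp g
  have hblocks : (realAdjMatrix G).submatrix f f + fromBlocks 1 0 0 0 =
      fromBlocks (vecMulVec 1 1) B Bᵀ 0 :=
    realAdjMatrix_submatrix_add_fromBlocks_one hT hTc
  refine ⟨_, _, _, _, _, isSplitProfile_entrySum hB0 hB1, ?_, ?_, ?_⟩
  · rw [← Nat.cast_add, ← Fintype.card_sum, Fintype.card_congr (Equiv.Set.sumCompl T)]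
  · rw [← entrySum_fromBlocks, ← hblocks, entrySum_add, entrySum_submatrix hsum,
      entrySum_fromBlocks_one, one_pow, one_mul]
  · calc walkSum (realAdjMatrix G) = walkSum ((realAdjMatrix G).submatrix f f) := by
          rw [walkSum_submatrix hsum, one_pow, one_mul]
      _ ≤ walkSum (fromBlocks (vecMulVec 1 1) B Bᵀ 0) :=
          walkSum_le_walkSum (fun _ _ => realAdjMatrix_nonneg G _ _) fun i j => by
            rw [← hblocks, Matrix.add_apply]
            exact le_add_of_nonneg_right (fromBlocks_one_apply_nonneg i j)
      _ ≤ _ := walkSum_fromBlocks_le hB0 hB1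

theorem exists_walkSum_le_walkDensityBound_add [Nonempty V] (G : SimpleGraph V) :
    ∃ δ ∈ Set.Icc (0 : ℝ) (1 / Fintype.card V), walkSum (realAdjMatrix G) ≤
      walkDensityBound (entrySum (realAdjMatrix G) / Fintype.card V ^ 2 + δ) *
        Fintype.card V ^ 5 := by
  obtain ⟨H, hH, hentry, hwalk⟩ := exists_isThreshold_walkSum_le G
  obtain ⟨T, hT⟩ := H.maximumClique_exists
  obtain ⟨t, m, α, R, P, h, hcard, hdensity, hsplit⟩ :=
    exists_isSplitProfile_of_isClique hT.isClique (hH.isIndepSet_compl hT)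
  have ht := h.clique_nonneg
  have hm := h.indep_nonneg
  have hn : 0 < t + m := hcard ▸ Nat.cast_pos.2 Fintype.card_pos
  rw [← hentry, ← hcard]
  refine ⟨t / (t + m) ^ 2, ⟨by positivity, ?_⟩, ?_⟩
  · rw [div_le_div_iff₀ (by positivity) hn]
    nlinarith
  · rw [← add_div, hdensity]
    exact hwalk.trans (hsplit.trans (h.splitWalkBound_le hn))

end SplitGraph

section Density

variable {V : Type*}

theorem realAdjMatrix_comap {W : Type*} (G : SimpleGraph V) (f : W → V) :
    realAdjMatrix (G.comap f) = (realAdjMatrix G).submatrix f f :=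
  rfl

theorem pathCount4_le [Finite V] (G : SimpleGraph V) : (pathCount4 G : ℝ) ≤ walkCount4 G / 2 := by
  have h : pathCount4 G ≤ walkCount4 G / 2 :=
    Nat.div_le_div_right <|
      Nat.card_mono (Set.toFinite {f : Fin 5 → V | ∀ i : Fin 4, G.Adj (f i.castSucc) (f i.succ)})
        fun _ hf => hf.2
  exact (Nat.cast_le.2 h).trans Nat.cast_div_le

variable [Fintype V]

theorem exists_walkSum_le_walkDensityBound_add_of_blowUp [Nonempty V] (G : SimpleGraph V) (k : ℕ) :
    ∃ δ ∈ Set.Icc (0 : ℝ) (1 / ((k : ℝ) + 1)), walkSum (realAdjMatrix G) ≤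
      walkDensityBound (entrySum (realAdjMatrix G) / Fintype.card V ^ 2 + δ) *
        Fintype.card V ^ 5 := by
  obtain ⟨δ, ⟨hδ0, hδ⟩, hle⟩ := exists_walkSum_le_walkDensityBound_add
    (G.comap (Prod.fst : V × Fin (k + 1) → V))
  have hsum (g : V → ℝ) : ∑ y : V × Fin (k + 1), g y.1 = ((k : ℝ) + 1) * ∑ x, g x := by
    simp [Fintype.sum_prod_type, Finset.mul_sum]
  have hk : (0 : ℝ) < k + 1 := k.cast_add_one_pos
  have hn : (1 : ℝ) ≤ Fintype.card V := Nat.one_le_cast.2 Fintype.card_pos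
  simp only [Fintype.card_prod, Fintype.card_fin, Nat.cast_mul, Nat.cast_succ] at hδ hle
  rw [realAdjMatrix_comap, entrySum_submatrix hsum, walkSum_submatrix hsum,
    mul_comm (_ : ℝ) (k + 1 : ℝ), mul_pow, mul_pow, mul_div_mul_left _ _ (by positivity),
    mul_left_comm] at hle
  refine ⟨δ, ⟨hδ0, hδ.trans ?_⟩, le_of_mul_le_mul_left hle (by positivity)⟩
  exact one_div_le_one_div_of_le hk (le_mul_of_one_le_left hk.le hn)

theorem walkSum_le_walkDensityBound (G : SimpleGraph V) :
    walkSum (realAdjMatrix G) ≤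
      walkDensityBound (entrySum (realAdjMatrix G) / Fintype.card V ^ 2) * Fintype.card V ^ 5 := by
  rcases isEmpty_or_nonempty V with hV | hV
  · simp [walkSum]
  choose δ hδ hle using exists_walkSum_le_walkDensityBound_add_of_blowUp G
  have hδ_lim : Filter.Tendsto δ Filter.atTop (nhds 0) :=
    squeeze_zero (fun k => (hδ k).1) (fun k => (hδ k).2) tendsto_one_div_add_atTop_nhds_zero_nat
  have hlim := (continuous_walkDensityBound.tendsto _).comp
    (hδ_lim.const_add (entrySum (realAdjMatrix G) / Fintype.card V ^ 2))
  rw [add_zero] at hlim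
  exact ge_of_tendsto' (hlim.mul_const _) hle

theorem entrySum_realAdjMatrix (G : SimpleGraph V) :
    entrySum (realAdjMatrix G) = 2 * Nat.card G.edgeSet := by
  classical
  have hdegree (x : V) : ∑ y, realAdjMatrix G x y = G.degree x := by
    simp only [realAdjMatrix, SimpleGraph.adjMatrix_apply, Finset.sum_boole, SimpleGraph.degree,
      SimpleGraph.neighborFinset_eq_filter]
  rw [entrySum_eq_sum, Finset.sum_congr rfl fun x _ => hdegree x, Nat.card_eq_fintype_card,
    ← SimpleGraph.edgeFinset_card]
  exact_mod_cast G.sum_degrees_eq_twice_card_edges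

theorem walkSum_realAdjMatrix (G : SimpleGraph V) : walkSum (realAdjMatrix G) = walkCount4 G := by
  classical
  have hprod (f : Fin 5 → V) : ∏ i : Fin 4, realAdjMatrix G (f i.castSucc) (f i.succ) =
      if ∀ i : Fin 4, G.Adj (f i.castSucc) (f i.succ) then 1 else 0 := by
    simp [realAdjMatrix, Fintype.prod_boole]
  rw [walkSum_eq_one_dotProduct_pow (isAdjMatrix_realAdjMatrix G).symm,
    ← sum_mul_prod_eq_dotProduct_pow]
  simp only [Pi.one_apply, one_mul, hprod, Finset.sum_boole, walkCount4,
    Nat.card_eq_fintype_card, Fintype.card_subtype]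

end Density

theorem path4_upper_bound {V : Type*} [Fintype V] (G : SimpleGraph V)
    (n e : ℕ) (hn : n = Fintype.card V) (he : e = Nat.card G.edgeSet)
    (c : ℝ) (hc : c = 2 * e / (n : ℝ) ^ 2) :
    (pathCount4 G : ℝ) ≤
      1 / 2 * max ((1 - Real.sqrt (1 - c)) ^ 2 * ((c + 1) * Real.sqrt (1 - c) + c))
        (c ^ ((5 : ℝ) / 2)) * (n : ℝ) ^ 5 := by
  have hwalk := walkSum_le_walkDensityBound G
  rw [walkSum_realAdjMatrix, entrySum_realAdjMatrix, ← hn, ← he, ← hc, walkDensityBound] at hwalk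
  linarith [pathCount4_le G]
end

section
/- Let 0 ≤ c ≤ 1 and let K be a positive integer. Let A : [0,1)² → [0,1] be a function satisfying ∫₀¹∫₀¹ A(x,y) dx dy = c and A(x,y) = A(y,x) for all 0 ≤ x,y < 1, and suppose there are numbers 0 = q₀ < q₁ < … < q_K = 1 such that A is constant on each rectangle [q_{i−1}, q_i) × [q_{j−1}, q_j) for all 1 ≤ i, j ≤ K. Then S(A) ≤ max( (1−√(1−c))²·((c+1)√(1−c)+c), c^{5/2} ). -/
open MeasureTheory

/-- `ell A x = ∫₀¹ A(x,y) dy`. -/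
noncomputable def ell (A : ℝ → ℝ → ℝ) (x : ℝ) : ℝ := ∫ y in (0:ℝ)..1, A x y

/-- `S(A) = ∫₀¹∫₀¹ ℓ(x)·ℓ(y)·min(ℓ(x),ℓ(y)) dx dy`. -/
noncomputable def Sfun (A : ℝ → ℝ → ℝ) : ℝ :=
  ∫ x in (0:ℝ)..1, ∫ y in (0:ℝ)..1, ell A x * ell A y * min (ell A x) (ell A y)

/-!
Sort the degrees decreasingly and let `u` be the side of the largest square below the resulting
curve. With `F t` the integral of `ℓ` over `{ℓ ≥ t}`, the layer cake formula gives
`S(A) = ∫₀¹ F(t)² dt`. Below the threshold `u`, `F` lies between its value at `u` and `c`, so `F²`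
is at most a secant line of slope `B`. Above it, with `m = |{ℓ ≥ t}| ≤ u` and `E` the excess of `ℓ`
over `u`, `F ≤ min(m, u m + E)`, so `F²` is at most some `A₀ m + B m (u - m)`. Both majorants have
explicit integrals, and the leftover term `u E - ∫ m²` is controlled by a bathtub argument: the
excess of the vertices of degree above `u` comes from edges to vertices outside the square. In terms
of `u`, `E` and `√c`, it remains to choose `A₀` and `B`, and a calculus inequality which by
convexity reduces to the extreme values of `E`.
-/

lemma quadratic_nonpos_of_endpoints {a b c x p q : ℝ} (ha : 0 ≤ a) (hpx : p ≤ x) (hxq : x ≤ q)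
    (hp : a * p ^ 2 + b * p + c ≤ 0) (hq : a * q ^ 2 + b * q + c ≤ 0) :
    a * x ^ 2 + b * x + c ≤ 0 := by
  rcases (hpx.trans hxq).eq_or_lt with rfl | hpq
  · rwa [le_antisymm hxq hpx]
  refine nonpos_of_mul_nonpos_right ?_ (sub_pos.2 hpq)
  have := sub_nonneg.2 hpx
  have := sub_nonneg.2 hxq
  calc (q - p) * (a * x ^ 2 + b * x + c)
      = (q - x) * (a * p ^ 2 + b * p + c) + (x - p) * (a * q ^ 2 + b * q + c)
        - a * ((x - p) * (q - x) * (q - p)) := by ring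
    _ ≤ 0 := by
      have := mul_nonpos_of_nonneg_of_nonpos (sub_nonneg.2 hxq) hp
      have := mul_nonpos_of_nonneg_of_nonpos (sub_nonneg.2 hpx) hq
      have : 0 ≤ a * ((x - p) * (q - x) * (q - p)) := by
        have := (sub_pos.2 hpq).le
        positivity
      linarith

section Superlevel

variable {ι : Type*} [Fintype ι] {v w d : ι → ℝ} {t u : ℝ}

/-- The `v`-measure of the superlevel set `{i | t ≤ d i}`. -/
noncomputable def superlevelSum (v d : ι → ℝ) (t : ℝ) : ℝ := ∑ i with t ≤ d i, v i

/-- The `v`-integral of the part of `d` above `u`. -/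
noncomputable def excess (v d : ι → ℝ) (u : ℝ) : ℝ := ∑ i, v i * max (d i - u) 0

/-- The excess of `min (d i) (d j)` above `u` on the product of `(ι, v)` with itself. -/
noncomputable def pairExcess (v d : ι → ℝ) (u : ℝ) : ℝ :=
  ∑ i, ∑ j, v i * v j * max (min (d i) (d j) - u) 0

lemma superlevelSum_nonneg (hv : ∀ i, 0 ≤ v i) (d : ι → ℝ) (t : ℝ) : 0 ≤ superlevelSum v d t :=
  Finset.sum_nonneg fun i _ => hv i

lemma superlevelSum_le_sum (hv : ∀ i, 0 ≤ v i) (d : ι → ℝ) (t : ℝ) :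
    superlevelSum v d t ≤ ∑ i, v i :=
  Finset.sum_le_univ_sum_of_nonneg hv

lemma superlevelSum_antitone (hv : ∀ i, 0 ≤ v i) (d : ι → ℝ) : Antitone (superlevelSum v d) :=
  fun _ _ hst => Finset.sum_le_sum_of_subset_of_nonneg
    (Finset.monotone_filter_right _ fun _ _ h => hst.trans h) fun i _ _ => hv i

lemma superlevelSum_eq_sum_indicator (v d : ι → ℝ) :
    superlevelSum v d = fun t => ∑ i, (Set.Iic (d i)).indicator (fun _ => v i) t := by
  ext t
  simp [superlevelSum, Set.indicator, Finset.sum_filter]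

lemma superlevelSum_sq (v d : ι → ℝ) (t : ℝ) :
    superlevelSum v d t ^ 2 =
      superlevelSum (fun p : ι × ι => v p.1 * v p.2) (fun p => min (d p.1) (d p.2)) t := by
  rw [superlevelSum, sq, Finset.sum_mul_sum, ← Finset.sum_product', ← Finset.filter_product,
    Finset.univ_product_univ]
  simp only [superlevelSum, le_min_iff]

lemma intervalIntegrable_indicator_Iic (a b x y : ℝ) :
    IntervalIntegrable ((Set.Iic x).indicator fun _ => y) volume a b :=
  ⟨(integrableOn_const (by simp)).indicator measurableSet_Iic,
    (integrableOn_const (by simp)).indicator measurableSet_Iic⟩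

lemma intervalIntegrable_superlevelSum (v d : ι → ℝ) (a b : ℝ) :
    IntervalIntegrable (superlevelSum v d) volume a b := by
  rw [superlevelSum_eq_sum_indicator, ← Finset.sum_fn]
  exact IntervalIntegrable.sum Finset.univ
    fun i _ => intervalIntegrable_indicator_Iic a b (d i) (v i)

lemma intervalIntegrable_superlevelSum_sq (v d : ι → ℝ) (a b : ℝ) :
    IntervalIntegrable (fun t => superlevelSum v d t ^ 2) volume a b := by
  simpa only [superlevelSum_sq] using intervalIntegrable_superlevelSum _ _ a b

lemma integral_superlevelSum (v d : ι → ℝ) {a b : ℝ} (hab : a ≤ b) :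
    ∫ t in a..b, superlevelSum v d t = ∑ i, v i * max (min b (d i) - a) 0 := by
  rw [superlevelSum_eq_sum_indicator, intervalIntegral.integral_finsetSum
    fun i _ => intervalIntegrable_indicator_Iic a b (d i) (v i)]
  refine Finset.sum_congr rfl fun i _ => ?_
  rw [intervalIntegral.integral_of_le hab, setIntegral_indicator measurableSet_Iic,
    Set.Ioc_inter_Iic]
  simp [Real.volume_real_Ioc, mul_comm]

lemma integral_zero_superlevelSum (v : ι → ℝ) (hd : ∀ i, 0 ≤ d i) (hu : 0 ≤ u) :
    ∫ t in (0 : ℝ)..u, superlevelSum v d t = ∑ i, v i * min (d i) u := by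
  simp [integral_superlevelSum v d hu, min_comm u, hd, hu]

lemma integral_superlevelSum_eq_excess (v : ι → ℝ) {a b : ℝ} (hab : a ≤ b) (hd : ∀ i, d i ≤ b) :
    ∫ t in a..b, superlevelSum v d t = excess v d a := by
  simp [integral_superlevelSum v d hab, excess, hd]

lemma integral_superlevelSum_sq (v : ι → ℝ) {a b : ℝ} (hab : a ≤ b) (hd : ∀ i, d i ≤ b) :
    ∫ t in a..b, superlevelSum v d t ^ 2 = pairExcess v d a := by
  simp only [superlevelSum_sq, integral_superlevelSum_eq_excess _ hab
    fun p : ι × ι => min_le_of_left_le (hd p.1)]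
  exact Fintype.sum_prod_type _

lemma excess_nonneg (hv : ∀ i, 0 ≤ v i) (d : ι → ℝ) (u : ℝ) : 0 ≤ excess v d u :=
  Finset.sum_nonneg fun i _ => mul_nonneg (hv i) (le_max_right _ _)

lemma superlevelSum_mul_le (hw : ∀ i, 0 ≤ w i) (d : ι → ℝ) (u t : ℝ) :
    superlevelSum (fun i => w i * d i) d t ≤ u * superlevelSum w d t + excess w d u := by
  have split : superlevelSum (fun i => w i * d i) d t - u * superlevelSum w d t
      = ∑ i with t ≤ d i, w i * (d i - u) := by
    simp only [superlevelSum, Finset.mul_sum, ← Finset.sum_sub_distrib]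
    exact Finset.sum_congr rfl fun i _ => by ring
  have : ∑ i with t ≤ d i, w i * (d i - u) ≤ excess w d u :=
    (Finset.sum_le_sum fun i _ => mul_le_mul_of_nonneg_left (le_max_left _ _) (hw i)).trans
      (Finset.sum_le_univ_sum_of_nonneg fun i => mul_nonneg (hw i) (le_max_right _ _))
  linarith

lemma superlevelSum_mul_le_self (hw : ∀ i, 0 ≤ w i) (hd : ∀ i, d i ≤ 1) (t : ℝ) :
    superlevelSum (fun i => w i * d i) d t ≤ superlevelSum w d t :=
  Finset.sum_le_sum fun i _ => mul_le_of_le_one_right (hw i) (hd i)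

lemma exists_sum_lt_le_le_superlevelSum [Nonempty ι] (hw : ∀ i, 0 ≤ w i) (hd : ∀ i, 0 ≤ d i) :
    ∃ u, ∑ i with u < d i, w i ≤ u ∧ u ≤ superlevelSum w d u := by
  obtain ⟨k, hk⟩ := Finite.exists_max fun i => min (d i) (superlevelSum w d (d i))
  set u := min (d k) (superlevelSum w d (d k))
  refine ⟨u, ?_, (min_le_right _ _).trans (superlevelSum_antitone hw d (min_le_left _ _))⟩
  rcases (Finset.univ.filter fun i => u < d i).eq_empty_or_nonempty with empty | nonempty
  · simpa only [empty, Finset.sum_empty] using le_min (hd k) (superlevelSum_nonneg hw d (d k))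
  obtain ⟨j, hj, hmin⟩ := Finset.exists_min_image _ d nonempty
  calc ∑ i with u < d i, w i ≤ superlevelSum w d (d j) :=
        Finset.sum_le_sum_of_subset_of_nonneg
          (fun i hi => Finset.mem_filter.2 ⟨Finset.mem_univ i, hmin i hi⟩) fun i _ _ => hw i
    _ ≤ u := (min_le_iff.1 (hk j)).resolve_left (not_le.2 (Finset.mem_filter.1 hj).2)

end Superlevel

section TopFraction

variable {ι : Type*} [Fintype ι] {w d χ : ι → ℝ} {u : ℝ}

/-- `χ` is the indicator of `{i | u < d i}` together with a fraction of `{i | d i = u}`, chosen such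
that the `w`-mass of `χ` is the threshold `u` itself. This fractional set plays the role of the
Durfee square of the decreasing rearrangement of `d`. -/
structure IsTopFraction (w d : ι → ℝ) (u : ℝ) (χ : ι → ℝ) : Prop where
  nonneg : ∀ i, 0 ≤ χ i
  le_one : ∀ i, χ i ≤ 1
  eq_one_of_lt : ∀ i, u < d i → χ i = 1
  eq_zero_of_lt : ∀ i, d i < u → χ i = 0
  sum_eq : ∑ i, w i * χ i = u

lemma exists_isTopFraction [Nonempty ι] (hw : ∀ i, 0 ≤ w i) (hd : ∀ i, 0 ≤ d i) :
    ∃ u χ, IsTopFraction w d u χ := by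
  obtain ⟨u, above_le, le_superlevel⟩ := exists_sum_lt_le_le_superlevelSum hw hd
  have superlevel_eq : superlevelSum w d u = ∑ i with u < d i, w i + ∑ i with d i = u, w i := by
    simp only [superlevelSum, Finset.sum_filter, ← Finset.sum_add_distrib]
    refine Finset.sum_congr rfl fun i _ => ?_
    rcases lt_trichotomy u (d i) with h | h | h
    · simp [h, h.le, h.ne']
    · simp [h]
    · simp [h.not_ge, h.not_gt, h.ne]
  set N := ∑ i with u < d i, w i
  set M := ∑ i with d i = u, w i
  have hM : u - N ≤ M := by linarith
  have hM₀ : 0 ≤ M := Finset.sum_nonneg fun i _ => hw i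
  have fraction_nonneg : 0 ≤ (u - N) / M := div_nonneg (sub_nonneg.2 above_le) hM₀
  have fraction_le_one : (u - N) / M ≤ 1 := div_le_one_of_le₀ hM hM₀
  refine ⟨u, fun i => if u < d i then 1 else if d i = u then (u - N) / M else 0, fun i => ?_,
    fun i => ?_, fun i h => if_pos h, fun i h => ?_, ?_⟩
  · split_ifs <;> linarith
  · split_ifs <;> linarith
  · simp [h.not_gt, h.ne]
  · calc _ = N + M * ((u - N) / M) := by
          simp only [N, M, Finset.sum_filter, Finset.sum_mul, ← Finset.sum_add_distrib]
          refine Finset.sum_congr rfl fun i _ => ?_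
          split_ifs <;> linarith
      _ = u := by
          rw [mul_div_cancel_of_imp' fun h => by linarith, add_sub_cancel]

namespace IsTopFraction

lemma mul_sub_eq (h : IsTopFraction w d u χ) (i : ι) : χ i * (d i - u) = max (d i - u) 0 := by
  rcases lt_trichotomy u (d i) with hi | hi | hi
  · rw [h.eq_one_of_lt i hi, one_mul, max_eq_left (sub_nonneg.2 hi.le)]
  · simp [← hi]
  · rw [h.eq_zero_of_lt i hi, zero_mul, max_eq_right (sub_nonpos.2 hi.le)]

lemma one_sub_mul_sub (h : IsTopFraction w d u χ) (i : ι) :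
    (1 - χ i) * (u - d i) = u - min (d i) u := by
  have := h.mul_sub_eq i
  have := max_add_min (d i) u
  have := max_sub_sub_right (d i) u u
  rw [sub_self] at this
  linarith

lemma sum_mul_mul (h : IsTopFraction w d u χ) :
    ∑ i, w i * χ i * d i = u ^ 2 + excess w d u := by
  have (i : ι) : w i * χ i * d i = w i * χ i * u + w i * max (d i - u) 0 := by
    rw [← h.mul_sub_eq]; ring
  simp only [this, Finset.sum_add_distrib, ← Finset.sum_mul, h.sum_eq, excess, sq]

lemma excess_le (h : IsTopFraction w d u χ) (hw : ∀ i, 0 ≤ w i) (hd : ∀ i, d i ≤ 1) :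
    excess w d u ≤ u * (1 - u) := by
  have : ∑ i, w i * χ i * d i ≤ ∑ i, w i * χ i :=
    Finset.sum_le_sum fun i _ => mul_le_of_le_one_right (mul_nonneg (hw i) (h.nonneg i)) (hd i)
  rw [h.sum_mul_mul, h.sum_eq] at this
  linarith

lemma sum_one_sub_mul_mul (h : IsTopFraction w d u χ) :
    ∑ i, w i * (1 - χ i) * d i = ∑ i, w i * d i - (u ^ 2 + excess w d u) := by
  rw [← h.sum_mul_mul, ← Finset.sum_sub_distrib]
  exact Finset.sum_congr rfl fun i _ => by ring

lemma sum_mul_sub_le (h : IsTopFraction w d u χ) (hw : ∀ i, 0 ≤ w i) :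
    ∑ i, w i * d i - (u ^ 2 + excess w d u) ≤ (∑ i, w i - u) * u := by
  calc _ = ∑ i, w i * (1 - χ i) * d i := h.sum_one_sub_mul_mul.symm
    _ ≤ ∑ i, w i * (1 - χ i) * u := Finset.sum_le_sum fun i _ => by
        have := mul_nonneg (hw i) (sub_nonneg.2 (min_le_right (d i) u))
        rw [← h.one_sub_mul_sub] at this
        linarith
    _ = (∑ i, w i - u) * u := by
        simp only [mul_sub, mul_one, ← Finset.sum_mul, Finset.sum_sub_distrib, h.sum_eq]

lemma sum_one_sub_mul_two_mul_sub_sq (h : IsTopFraction w d u χ) :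
    ∑ i, w i * (1 - χ i) * (2 * u * d i - d i ^ 2) =
      u * (∑ i, w i * d i - (u ^ 2 + excess w d u)) +
        ((∑ i, w i * d i) * u - ∑ i, w i * d i * min (d i) u) := by
  rw [← h.sum_one_sub_mul_mul, Finset.mul_sum, Finset.sum_mul, ← Finset.sum_sub_distrib,
    ← Finset.sum_add_distrib]
  refine Finset.sum_congr rfl fun i _ => ?_
  linear_combination w i * d i * h.one_sub_mul_sub i

lemma sq_add_excess_le_superlevelSum (h : IsTopFraction w d u χ) (hw : ∀ i, 0 ≤ w i)
    (hd : ∀ i, 0 ≤ d i) : u ^ 2 + excess w d u ≤ superlevelSum (fun i => w i * d i) d u := by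
  rw [← h.sum_mul_mul, superlevelSum, Finset.sum_filter]
  refine Finset.sum_le_sum fun i _ => ?_
  split_ifs with hi
  · exact mul_le_mul_of_nonneg_right (mul_le_of_le_one_right (hw i) (h.le_one i)) (hd i)
  · simp [h.eq_zero_of_lt i (not_le.1 hi)]

lemma superlevelSum_le (h : IsTopFraction w d u χ) (hw : ∀ i, 0 ≤ w i) {t : ℝ} (ht : u < t) :
    superlevelSum w d t ≤ u := by
  rw [← h.sum_eq, superlevelSum, Finset.sum_filter]
  refine Finset.sum_le_sum fun i _ => ?_
  split_ifs with hi
  · rw [h.eq_one_of_lt i (ht.trans_le hi), mul_one]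
  · exact mul_nonneg (hw i) (h.nonneg i)

end IsTopFraction

end TopFraction

section Rank

variable {ι : Type*} {w d χ : ι → ℝ} {u : ℝ}

lemma sum_sum_eq_of_add_swap_eq {s : Finset ι} {f g : ι → ι → ℝ}
    (h : ∀ i j, f i j + f j i = g i j + g j i) :
    ∑ i ∈ s, ∑ j ∈ s, f i j = ∑ i ∈ s, ∑ j ∈ s, g i j := by
  have : ∑ i ∈ s, ∑ j ∈ s, (f i j + f j i) = ∑ i ∈ s, ∑ j ∈ s, (g i j + g j i) := by simp only [h]
  simp only [Finset.sum_add_distrib] at this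
  rw [Finset.sum_comm (f := fun i j => f j i), Finset.sum_comm (f := fun i j => g j i)] at this
  linarith

/-- Twice the indicator of `x < y`, with ties split evenly so that
`precedes x y + precedes y x = 2`. -/
noncomputable def precedes (x y : ℝ) : ℝ := (if x < y then 1 else 0) + if x ≤ y then 1 else 0

lemma precedes_nonneg (x y : ℝ) : 0 ≤ precedes x y := by
  unfold precedes; split_ifs <;> norm_num

lemma precedes_le_two (x y : ℝ) : precedes x y ≤ 2 := by
  unfold precedes; split_ifs <;> norm_num

lemma precedes_eq_zero {x y : ℝ} (h : y < x) : precedes x y = 0 := by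
  simp [precedes, h.not_gt, h.not_ge]

lemma precedes_add_swap (x y : ℝ) : precedes x y + precedes y x = 2 := by
  rcases lt_trichotomy x y with h | rfl | h
  · simp [precedes, h, h.le, h.not_gt, h.not_ge]; norm_num
  · simp [precedes]; norm_num
  · simp [precedes, h, h.le, h.not_gt, h.not_ge]; norm_num

lemma max_sub_mul_precedes_add_swap (u x y : ℝ) :
    max (x - u) 0 * precedes x y + max (y - u) 0 * precedes y x = 2 * max (min x y - u) 0 := by
  wlog hxy : x ≤ y generalizing x y
  · rw [add_comm, this y x (le_of_not_ge hxy), min_comm]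
  rw [min_eq_left hxy]
  rcases hxy.eq_or_lt with rfl | hlt
  · rw [← mul_add, precedes_add_swap, mul_comm]
  · have := precedes_add_swap x y
    rw [precedes_eq_zero hlt] at this ⊢
    linear_combination max (x - u) 0 * this

variable [Fintype ι]

/-- Twice the `w`-mass ranked above `i` when ordering by `d`, with ties split evenly. -/
noncomputable def rank (w d : ι → ℝ) (i : ι) : ℝ := ∑ k, w k * precedes (d i) (d k)

lemma pairExcess_eq_sum_mul_rank (w d : ι → ℝ) (u : ℝ) :
    pairExcess w d u = ∑ i, w i * max (d i - u) 0 * rank w d i := by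
  have swap : pairExcess w d u
      = ∑ i, ∑ j, w i * w j * (max (d i - u) 0 * precedes (d i) (d j)) :=
    sum_sum_eq_of_add_swap_eq fun i j => by
      rw [min_comm (d j)]
      linear_combination -(w i * w j) * max_sub_mul_precedes_add_swap u (d i) (d j)
  simp only [swap, rank, Finset.mul_sum]
  exact Finset.sum_congr rfl fun i _ => Finset.sum_congr rfl fun j _ => by ring

lemma sq_sum_le_sum_mul_rank {s : Finset ι} {b : ι → ℝ} (hb : ∀ i, 0 ≤ b i)
    (hbw : ∀ i, b i ≤ w i) (d : ι → ℝ) : (∑ i ∈ s, b i) ^ 2 ≤ ∑ i ∈ s, b i * rank w d i :=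
  calc (∑ i ∈ s, b i) ^ 2 = ∑ i ∈ s, ∑ k ∈ s, b i * b k := by rw [sq, Finset.sum_mul_sum]
    _ = ∑ i ∈ s, ∑ k ∈ s, b i * (b k * precedes (d i) (d k)) :=
      sum_sum_eq_of_add_swap_eq fun i k => by
        linear_combination -(b i * b k) * precedes_add_swap (d i) (d k)
    _ ≤ ∑ i ∈ s, b i * rank w d i := by
      simp only [← Finset.mul_sum]
      refine Finset.sum_le_sum fun i _ => mul_le_mul_of_nonneg_left ?_ (hb i)
      exact (Finset.sum_le_univ_sum_of_nonneg
        fun k => mul_nonneg (hb k) (precedes_nonneg _ _)).trans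
        (Finset.sum_le_sum fun k _ => mul_le_mul_of_nonneg_right (hbw k) (precedes_nonneg _ _))

lemma IsTopFraction.rank_le (h : IsTopFraction w d u χ) (hw : ∀ i, 0 ≤ w i) {i : ι}
    (hi : u < d i) : rank w d i ≤ 2 * u := by
  rw [← h.sum_eq, Finset.mul_sum]
  refine Finset.sum_le_sum fun k _ => ?_
  have : precedes (d i) (d k) ≤ 2 * χ k := by
    rcases lt_or_ge (d k) (d i) with hk | hk
    · rw [precedes_eq_zero hk]
      exact mul_nonneg zero_le_two (h.nonneg k)
    · rw [h.eq_one_of_lt k (hi.trans_le hk), mul_one]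
      exact precedes_le_two _ _
  linarith [mul_le_mul_of_nonneg_left this (hw k)]

end Rank

section Layers

variable {ι : Type*} [Fintype ι] {v w d χ : ι → ℝ} {u A B : ℝ}

lemma integral_superlevelSum_sq_le (hv : ∀ i, 0 ≤ v i) (hd : ∀ i, 0 ≤ d i) (hu : 0 ≤ u)
    (hB : B ≤ ∑ i, v i + superlevelSum v d u) :
    ∫ t in (0 : ℝ)..u, superlevelSum v d t ^ 2 ≤
      (∑ i, v i) ^ 2 * u - B * ((∑ i, v i) * u - ∑ i, v i * min (d i) u) := by
  have integrable := (intervalIntegrable_superlevelSum v d 0 u).const_mul B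
  set c := ∑ i, v i
  have secant_le : ∀ t ∈ Set.Icc 0 u,
      superlevelSum v d t ^ 2 ≤ (c ^ 2 - B * c) + B * superlevelSum v d t := fun t ht => by
    have := sub_nonneg.2 (superlevelSum_le_sum hv d t)
    have := superlevelSum_antitone hv d ht.2
    nlinarith
  calc ∫ t in (0 : ℝ)..u, superlevelSum v d t ^ 2
      ≤ ∫ t in (0 : ℝ)..u, ((c ^ 2 - B * c) + B * superlevelSum v d t) :=
        intervalIntegral.integral_mono_on hu (intervalIntegrable_superlevelSum_sq v d 0 u)
          (intervalIntegrable_const.add integrable) secant_le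
    _ = c ^ 2 * u - B * (c * u - ∑ i, v i * min (d i) u) := by
        rw [intervalIntegral.integral_add intervalIntegrable_const integrable,
          intervalIntegral.integral_const, intervalIntegral.integral_const_mul,
          integral_zero_superlevelSum v hd hu, smul_eq_mul]
        ring

/-- The envelope `min x (u * x + E) ^ 2` is convex on either side of its kink `E / (1 - u)`, so on
`[0, u]` it lies below a concave quadratic through the origin as soon as it does so at the kink and
at `u`. -/
lemma sq_le_of_le_min {E x y : ℝ} (hu : 0 < u) (hu₁ : u < 1) (hE : 0 ≤ E) (hB : 0 ≤ B)
    (top : (u ^ 2 + E) ^ 2 / u ≤ A) (kink : E / (1 - u) - B * (u - E / (1 - u)) ≤ A)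
    (hy : 0 ≤ y) (hyx : y ≤ x) (hyE : y ≤ u * x + E) (hxu : x ≤ u) :
    y ^ 2 ≤ A * x + B * (x * (u - x)) := by
  have hn : 0 < 1 - u := sub_pos.2 hu₁
  obtain ⟨p, hp⟩ : ∃ p, p = E / (1 - u) := ⟨_, rfl⟩
  have hEp : E = p * (1 - u) := by rw [hp, div_mul_cancel₀ _ hn.ne']
  have hp₀ : 0 ≤ p := hp ▸ div_nonneg hE hn.le
  rw [← hp] at kink
  rcases le_total x p with hxp | hpx
  · have : x ≤ A + B * (u - x) := by linarith [mul_nonneg hB (sub_nonneg.2 hxp)]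
    calc y ^ 2 ≤ x ^ 2 := pow_le_pow_left₀ hy hyx 2
      _ ≤ x * (A + B * (u - x)) := by
        rw [sq]; exact mul_le_mul_of_nonneg_left this (hy.trans hyx)
      _ = A * x + B * (x * (u - x)) := by ring
  · have : (u ^ 2 + B) * x ^ 2 + (2 * u * E - A - B * u) * x + E ^ 2 ≤ 0 := by
      refine quadratic_nonpos_of_endpoints (by positivity) hpx hxu ?_ ?_
      · have : u * p + E = p := by rw [hEp]; ring
        calc _ = (u * p + E) ^ 2 + B * p ^ 2 - (A + B * u) * p := by ring
          _ = p * (p - B * (u - p) - A) := by rw [this]; ring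
          _ ≤ 0 := mul_nonpos_of_nonneg_of_nonpos hp₀ (by linarith)
      · rw [div_le_iff₀ hu] at top
        linarith
    linarith [pow_le_pow_left₀ hy hyE 2]

lemma IsTopFraction.integral_superlevelSum_sq_le (h : IsTopFraction w d u χ)
    (hw : ∀ i, 0 ≤ w i) (hd₀ : ∀ i, 0 ≤ d i) (hd₁ : ∀ i, d i ≤ 1) (hu : 0 < u) (hu₁ : u < 1)
    (hB : 0 ≤ B) (top : (u ^ 2 + excess w d u) ^ 2 / u ≤ A)
    (kink : excess w d u / (1 - u) - B * (u - excess w d u / (1 - u)) ≤ A) :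
    ∫ t in u..1, superlevelSum (fun i => w i * d i) d t ^ 2 ≤
      A * excess w d u + B * (u * excess w d u - pairExcess w d u) := by
  have integrable := (intervalIntegrable_superlevelSum w d u 1).const_mul (A + B * u)
  have integrable_sq := (intervalIntegrable_superlevelSum_sq w d u 1).const_mul B
  have envelope_le : ∀ t ∈ Set.Ioo u 1, superlevelSum (fun i => w i * d i) d t ^ 2 ≤
      (A + B * u) * superlevelSum w d t - B * superlevelSum w d t ^ 2 := fun t ht => by
    have := sq_le_of_le_min hu hu₁ (excess_nonneg hw d u) hB top kink
      (superlevelSum_nonneg (fun i => mul_nonneg (hw i) (hd₀ i)) d t)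
      (superlevelSum_mul_le_self hw hd₁ t) (superlevelSum_mul_le hw d u t)
      (h.superlevelSum_le hw ht.1)
    linarith
  calc ∫ t in u..1, superlevelSum (fun i => w i * d i) d t ^ 2
      ≤ ∫ t in u..1, ((A + B * u) * superlevelSum w d t - B * superlevelSum w d t ^ 2) :=
        intervalIntegral.integral_mono_on_of_le_Ioo hu₁.le
          (intervalIntegrable_superlevelSum_sq _ d u 1) (integrable.sub integrable_sq) envelope_le
    _ = A * excess w d u + B * (u * excess w d u - pairExcess w d u) := by
        rw [intervalIntegral.integral_sub integrable integrable_sq,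
          intervalIntegral.integral_const_mul, intervalIntegral.integral_const_mul,
          integral_superlevelSum_eq_excess w hu₁.le hd₁, integral_superlevelSum_sq w hu₁.le hd₁]
        ring

end Layers

section Calculus

/-- The normalised value of the extremal step graphons: with `k = √c` and `s = (1 - √(1 - c)) / k`,
the first entry of the maximum in the theorem is `k ^ 5 * profile s`. -/
noncomputable def profile (s : ℝ) : ℝ := s + (1 - s ^ 2) * (1 + s ^ 2) ^ 2 / (8 * s)

/-- The bound on `S / k ^ 5` obtained when the secant majorant of the lower layers has slope
`k ^ 2 * b`, the threshold is `k * t`, the excess is `k ^ 2 * e`, and the majorant of the upper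
layers is tight at measure `k * t`. -/
noncomputable def topValue (t b e : ℝ) : ℝ :=
  t + e * ((t ^ 2 + e) ^ 2 / t) + b * t * (1 - t ^ 2 - 2 * e)

/-- The analogue of `topValue` when the majorant of the upper layers is tight at the kink
`m = k ^ 2 * e / (1 - k * t)` of the envelope `min m (k * t * m + k ^ 2 * e)`. -/
noncomputable def kinkValue (k t b e : ℝ) : ℝ :=
  t + e * (e / (k * (1 - k * t)) - b * (t - k * e / (1 - k * t))) + b * t * (1 - t ^ 2 - 2 * e)

lemma profile_le_max {s t : ℝ} (hs : 0 < s) (hst : s ≤ t) : profile t ≤ max 1 (profile s) := by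
  have ht : 0 < t := hs.trans_le hst
  rcases le_total 1 (6 * t + 4 * t ^ 2 + 2 * t ^ 3 + t ^ 4) with large | small
  · have factored : profile t - 1
        = (1 - t) ^ 2 * (1 - (6 * t + 4 * t ^ 2 + 2 * t ^ 3 + t ^ 4)) / (8 * t) := by
      unfold profile; field_simp; ring
    have : profile t - 1 ≤ 0 := factored ▸ div_nonpos_of_nonpos_of_nonneg
      (mul_nonpos_of_nonneg_of_nonpos (sq_nonneg _) (by linarith)) (by positivity)
    exact le_max_of_le_left (by linarith)
  · have factored : profile s - profile t = (t - s) * (1 - s * t * (9 - (t ^ 2 + t * s + s ^ 2)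
        - (t ^ 4 + t ^ 3 * s + t ^ 2 * s ^ 2 + t * s ^ 3 + s ^ 4))) / (8 * s * t) := by
      unfold profile; field_simp; ring
    have t_le : t ≤ 1 / 6 := by linarith [pow_pos ht 2, pow_pos ht 3, pow_pos ht 4]
    have st_le : s * t ≤ 1 / 9 := by nlinarith
    have rest_nonneg : 0 ≤ s * t * (t ^ 2 + t * s + s ^ 2
        + (t ^ 4 + t ^ 3 * s + t ^ 2 * s ^ 2 + t * s ^ 3 + s ^ 4)) := by positivity
    have : 0 ≤ profile s - profile t := factored ▸ div_nonneg
      (mul_nonneg (by linarith) (by linarith)) (by positivity)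
    exact le_max_of_le_right (by linarith)

lemma topValue_half_one_sub_sq {t : ℝ} (ht : t ≠ 0) (b : ℝ) :
    topValue t b ((1 - t ^ 2) / 2) = profile t := by
  unfold topValue profile; field_simp; ring

lemma kinkValue_half_one_sub_sq {k t : ℝ} (hk : k ≠ 0) (hkt : k * t < 1) (b : ℝ) :
    kinkValue k t b ((1 - t ^ 2) / 2) = t + (1 - t ^ 2) *
      (1 - t ^ 2 - b * k * (2 * t - k * (1 + t ^ 2))) / (4 * k * (1 - k * t)) := by
  have hn : 1 - k * t ≠ 0 := by linarith
  unfold kinkValue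
  generalize hn' : 1 - k * t = n at hn ⊢
  field_simp
  subst hn'
  ring

lemma topValue_le_chord {t b β η r : ℝ} (ht : 0 < t) (hβ : β ≤ 1) (hη : 0 ≤ η) (hr₀ : 0 ≤ r)
    (hr₁ : r ≤ 1) : topValue t (b + β * (r * η)) (r * η) ≤
      (1 - r) * topValue t b 0 + r * topValue t (b + β * η) η := by
  have gap : (1 - r) * topValue t b 0 + r * topValue t (b + β * η) η
      - topValue t (b + β * (r * η)) (r * η)
      = r * (1 - r) * η ^ 2 * ((η + r * η) / t + 2 * t * (1 - β)) := by
    unfold topValue; field_simp; ring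
  have : 0 ≤ r * (1 - r) * η ^ 2 * ((η + r * η) / t + 2 * t * (1 - β)) := by
    have := sub_nonneg.2 hr₁
    have := sub_nonneg.2 hβ
    positivity
  linarith

lemma kinkValue_le_chord {k t b β η r : ℝ} (hk : 0 < k) (hkt : k * t < 1) (hb : 0 ≤ b)
    (hβ₀ : 0 ≤ β) (hβ₁ : β ≤ 1) (hη : 0 ≤ η) (hr₀ : 0 ≤ r) (hr₁ : r ≤ 1) :
    kinkValue k t (b + β * (r * η)) (r * η) ≤
      (1 - r) * kinkValue k t b 0 + r * kinkValue k t (b + β * η) η := by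
  have hn : 0 < 1 - k * t := by linarith
  have gap : (1 - r) * kinkValue k t b 0 + r * kinkValue k t (b + β * η) η
      - kinkValue k t (b + β * (r * η)) (r * η)
      = r * (1 - r) * η ^ 2 * ((1 - β * (3 * (k * t) * (1 - k * t))
        + k ^ 2 * (b + β * (η + r * η))) / (k * (1 - k * t))) := by
    unfold kinkValue
    generalize hn' : 1 - k * t = n at hn ⊢
    field_simp
    subst hn'
    ring
  have : 0 ≤ r * (1 - r) * η ^ 2 * ((1 - β * (3 * (k * t) * (1 - k * t))
        + k ^ 2 * (b + β * (η + r * η))) / (k * (1 - k * t))) := by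
    have := sub_nonneg.2 hr₁
    have : 0 ≤ 1 - β * (3 * (k * t) * (1 - k * t)) := by
      nlinarith [mul_nonneg hβ₀ (sq_nonneg (k * t - 1 / 2))]
    positivity
  linarith

lemma two_mul_div_one_add_sq_mul_lt_one {s t : ℝ} (hs : 0 < s) (hs₁ : s < 1) (ht₁ : t ≤ 1) :
    2 * s / (1 + s ^ 2) * t < 1 := by
  have : 0 < 1 + s ^ 2 := by positivity
  rw [div_mul_eq_mul_div, div_lt_one this]
  nlinarith [sq_pos_of_pos (sub_pos.2 hs₁)]

lemma kink_polynomial_nonpos {s t : ℝ} (hs : 0 < s) (hst : s ≤ t) (ht : t ≤ 1 / 2) :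
    8 * s * (1 + s ^ 2 - 2 * s * t)
      + (1 + s ^ 2) ^ 2 * (2 * s * (1 - s ^ 2) - (t + s) * (2 - t ^ 2 - s ^ 2))
      - 2 * s * (3 + t ^ 2) * (1 - t ^ 2) * (1 - s * t) ≤ 0 := by
  have factored : 8 * s * (1 + s ^ 2 - 2 * s * t)
      + (1 + s ^ 2) ^ 2 * (2 * s * (1 - s ^ 2) - (t + s) * (2 - t ^ 2 - s ^ 2))
      - 2 * s * (3 + t ^ 2) * (1 - t ^ 2) * (1 - s * t)
      = (t - s) * (2 * (s * ((1 - s * t) * (t + s) * (2 + t ^ 2 + s ^ 2)))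
        + s ^ 2 * (6 - 4 * s ^ 2 - 2 * s ^ 4) - 16 * s ^ 2
        - (1 + s ^ 2) ^ 2 * (2 - t ^ 2 - 2 * s * t - 3 * s ^ 2)) := by ring
  have product_le : (1 - s * t) * (t + s) * (2 + t ^ 2 + s ^ 2) ≤ 5 / 2 * (t + s) := by
    have left_le : (1 - s * t) * (t + s) ≤ t + s := by
      nlinarith [mul_pos hs (hs.trans_le hst)]
    have right_le : 2 + t ^ 2 + s ^ 2 ≤ 5 / 2 := by nlinarith
    calc (1 - s * t) * (t + s) * (2 + t ^ 2 + s ^ 2) ≤ (t + s) * (5 / 2) :=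
          mul_le_mul left_le right_le (by positivity) (by linarith)
      _ = 5 / 2 * (t + s) := mul_comm _ _
  have square_ge : 2 - t ^ 2 - 2 * s * t - 3 * s ^ 2
      ≤ (1 + s ^ 2) ^ 2 * (2 - t ^ 2 - 2 * s * t - 3 * s ^ 2) :=
    le_mul_of_one_le_left (by nlinarith) (by nlinarith [sq_nonneg s])
  have power_le : s ^ 2 * (6 - 4 * s ^ 2 - 2 * s ^ 4) ≤ 6 * s ^ 2 := by
    linarith [pow_pos hs 4, pow_pos hs 6]
  have := mul_le_mul_of_nonneg_left product_le hs.le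
  rw [factored]
  exact mul_nonpos_of_nonneg_of_nonpos (by linarith) (by nlinarith)

lemma kinkValue_le_profile_of_le_half {s t : ℝ} (hs : 0 < s) (hst : s ≤ t) (ht : t ≤ 1 / 2) :
    kinkValue (2 * s / (1 + s ^ 2)) t ((3 + t ^ 2) / 2) ((1 - t ^ 2) / 2) ≤ profile s := by
  have hd : 0 < 1 + s ^ 2 - 2 * s * t := by nlinarith
  have hq : 0 < 1 + s ^ 2 := by positivity
  have hkt : 2 * s / (1 + s ^ 2) * t < 1 := by
    rw [div_mul_eq_mul_div, div_lt_one hq]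
    linarith
  have hkt' : 1 - 2 * s / (1 + s ^ 2) * t = (1 + s ^ 2 - 2 * s * t) / (1 + s ^ 2) := by
    field_simp
  have difference :
      kinkValue (2 * s / (1 + s ^ 2)) t ((3 + t ^ 2) / 2) ((1 - t ^ 2) / 2) - profile s
      = (t - s) * (8 * s * (1 + s ^ 2 - 2 * s * t)
        + (1 + s ^ 2) ^ 2 * (2 * s * (1 - s ^ 2) - (t + s) * (2 - t ^ 2 - s ^ 2))
        - 2 * s * (3 + t ^ 2) * (1 - t ^ 2) * (1 - s * t))
        / (8 * s * (1 + s ^ 2 - 2 * s * t)) := by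
    rw [kinkValue_half_one_sub_sq (by positivity) hkt, hkt', profile]
    generalize hd' : 1 + s ^ 2 - 2 * s * t = d at hd ⊢
    field_simp
    subst hd'
    ring
  have : _ ≤ (0 : ℝ) := difference ▸ div_nonpos_of_nonpos_of_nonneg
    (mul_nonpos_of_nonneg_of_nonpos (by linarith) (kink_polynomial_nonpos hs hst ht))
    (by positivity)
  linarith

lemma kink_cubic_nonpos {k t : ℝ} (hk₀ : 0 < k) (hk : k ≤ 2 / 7) (ht₀ : 1 / 2 ≤ t) (ht₁ : t ≤ 1) :
    (1 - t ^ 2) ^ 2 - 1 + k * (5 * t - 4 * (1 - t) * t * (1 - t ^ 2))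
      + k ^ 2 * (2 * (1 - t) * (1 - t ^ 4) - (4 * t ^ 2 + 2)) + 2 * k ^ 3 * t ≤ 0 := by
  have slope : 0 ≤ 5 * t - 4 * (1 - t) * t * (1 - t ^ 2)
      + (k + 2 / 7) * (2 * (1 - t) * (1 - t ^ 4) - (4 * t ^ 2 + 2))
      + 2 * t * (k ^ 2 + 2 / 7 * k + (2 / 7) ^ 2) := by
    have quadratic_nonneg : 0 ≤ (k + 2 / 7) * (2 * (1 - t) * (1 - t ^ 4)) := by
      have := sub_nonneg.2 ht₁
      have := sub_nonneg.2 (pow_le_one₀ (by linarith : 0 ≤ t) ht₁ (n := 4))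
      positivity
    have loss_le : (k + 2 / 7) * (4 * t ^ 2 + 2) ≤ 4 / 7 * (4 * t ^ 2 + 2) := by gcongr; linarith
    have gain_ge : 0 ≤ 5 * t - 4 * (1 - t) * t * (1 - t ^ 2) - 4 / 7 * (4 * t ^ 2 + 2) := by
      nlinarith [mul_nonneg (sub_nonneg.2 ht₀) (sub_nonneg.2 ht₁)]
    have remainder_nonneg : 0 ≤ 2 * t * (k ^ 2 + 2 / 7 * k + (2 / 7) ^ 2) := by positivity
    linarith
  have endpoint : (1 - t ^ 2) ^ 2 - 1 + 2 / 7 * (5 * t - 4 * (1 - t) * t * (1 - t ^ 2))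
      + (2 / 7) ^ 2 * (2 * (1 - t) * (1 - t ^ 4) - (4 * t ^ 2 + 2)) + 2 * (2 / 7) ^ 3 * t ≤ 0 := by
    nlinarith [mul_nonneg (sub_nonneg.2 ht₀) (sub_nonneg.2 ht₁)]
  linarith [mul_nonneg (sub_nonneg.2 hk) slope]

lemma kinkValue_le_of_le_two_sevenths {k t : ℝ} (hk₀ : 0 < k) (hk : k ≤ 2 / 7)
    (ht₀ : 1 / 2 ≤ t) (ht₁ : t ≤ 1) :
    kinkValue k t (2 * (1 - t)) ((1 - t ^ 2) / 2) ≤ 1 / (4 * k) + k / 2 := by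
  have hkt : k * t < 1 := by nlinarith
  have hn : 0 < 1 - k * t := by linarith
  have difference : kinkValue k t (2 * (1 - t)) ((1 - t ^ 2) / 2) - (1 / (4 * k) + k / 2)
      = ((1 - t ^ 2) ^ 2 - 1 + k * (5 * t - 4 * (1 - t) * t * (1 - t ^ 2))
        + k ^ 2 * (2 * (1 - t) * (1 - t ^ 4) - (4 * t ^ 2 + 2)) + 2 * k ^ 3 * t)
        / (4 * k * (1 - k * t)) := by
    rw [kinkValue_half_one_sub_sq hk₀.ne' hkt]
    generalize hn' : 1 - k * t = n at hn ⊢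
    field_simp
    subst hn'
    ring
  have : _ ≤ (0 : ℝ) := difference ▸ div_nonpos_of_nonpos_of_nonneg
    (kink_cubic_nonpos hk₀ hk ht₀ ht₁) (by positivity)
  linarith

lemma kinkValue_le_one {k t : ℝ} (hk₀ : 2 / 7 ≤ k) (hk₁ : k < 1) (ht₀ : 1 / 2 ≤ t) (ht₁ : t ≤ 1) :
    kinkValue k t (2 * (1 - t)) ((1 - t ^ 2) / 2) ≤ 1 := by
  have hkt : k * t < 1 := by nlinarith
  have hn : 0 < 1 - k * t := by linarith
  have hk : 0 < k := by linarith
  set a := 4 * t + 2 * (1 - t) * (1 + t) * (1 + t ^ 2) with ha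
  set b := -4 - 4 * (1 - t) * (1 + t) * t with hb
  have difference : kinkValue k t (2 * (1 - t)) ((1 - t ^ 2) / 2) - 1
      = (1 - t) * (a * k ^ 2 + b * k + (1 - t) * (1 + t) ^ 2) / (4 * k * (1 - k * t)) := by
    rw [kinkValue_half_one_sub_sq hk.ne' hkt, ha, hb]
    generalize hn' : 1 - k * t = n at hn ⊢
    field_simp
    subst hn'
    ring
  have quadratic_nonpos : a * k ^ 2 + b * k + (1 - t) * (1 + t) ^ 2 ≤ 0 := by
    refine quadratic_nonpos_of_endpoints ?_ hk₀ hk₁.le ?_ ?_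
    · have := sub_nonneg.2 ht₁
      positivity
    · nlinarith [mul_nonneg (sub_nonneg.2 ht₀) (sub_nonneg.2 ht₁)]
    · calc _ = -((1 - t) ^ 2 * (1 + t + 2 * t ^ 2)) := by ring
        _ ≤ 0 := neg_nonpos.2 (by positivity)
  have : _ ≤ (0 : ℝ) := difference ▸ div_nonpos_of_nonpos_of_nonneg
    (mul_nonpos_of_nonneg_of_nonpos (by linarith) quadratic_nonpos) (by positivity)
  linarith

lemma one_div_four_mul_add_half_le_profile {s : ℝ} (hs : 0 < s) (hs₁ : s ≤ 1) :
    1 / (4 * (2 * s / (1 + s ^ 2))) + 2 * s / (1 + s ^ 2) / 2 ≤ profile s := by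
  have difference : profile s - (1 / (4 * (2 * s / (1 + s ^ 2))) + 2 * s / (1 + s ^ 2) / 2)
      = s ^ 3 * (8 - (1 + s ^ 2) ^ 2) / (8 * (1 + s ^ 2)) := by
    unfold profile; field_simp; ring
  have : 0 ≤ 8 - (1 + s ^ 2) ^ 2 := by nlinarith [pow_le_one₀ hs.le hs₁ (n := 2), sq_nonneg s]
  have : 0 ≤ s ^ 3 * (8 - (1 + s ^ 2) ^ 2) / (8 * (1 + s ^ 2)) := by positivity
  linarith

lemma topValue_le_and_kinkValue_le {k t b β e R : ℝ} (hk : 0 < k) (hkt : k * t < 1) (ht : 0 < t)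
    (ht₁ : t ≤ 1) (hb : 0 ≤ b) (hβ₀ : 0 ≤ β) (hβ₁ : β ≤ 1) (hbt : b * t * (1 + t) ≤ 1)
    (he₀ : 0 ≤ e) (he : e ≤ (1 - t ^ 2) / 2) (hR : 1 ≤ R) (top : profile t ≤ R)
    (kink : kinkValue k t (b + β * ((1 - t ^ 2) / 2)) ((1 - t ^ 2) / 2) ≤ R) :
    topValue t (b + β * e) e ≤ R ∧ kinkValue k t (b + β * e) e ≤ R := by
  have zero_le : t + b * t * (1 - t ^ 2) ≤ R := by
    linarith [mul_nonneg (sub_nonneg.2 ht₁) (sub_nonneg.2 hbt)]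
  set η := (1 - t ^ 2) / 2 with hη
  have convex_le {x y r : ℝ} (hr₀ : 0 ≤ r) (hr₁ : r ≤ 1) (hx : x ≤ R) (hy : y ≤ R) :
      (1 - r) * x + r * y ≤ R := by
    linarith [mul_le_mul_of_nonneg_left hx (sub_nonneg.2 hr₁), mul_le_mul_of_nonneg_left hy hr₀]
  obtain ⟨r, hr₀, hr₁, rfl⟩ : ∃ r, 0 ≤ r ∧ r ≤ 1 ∧ e = r * η :=
    ⟨e / η, div_nonneg he₀ (he₀.trans he), div_le_one_of_le₀ he (he₀.trans he),
      (div_mul_cancel_of_imp fun h => by linarith).symm⟩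
  constructor
  · refine (topValue_le_chord ht hβ₁ (he₀.trans he) hr₀ hr₁).trans (convex_le hr₀ hr₁ ?_ ?_)
    · simpa [topValue] using zero_le
    · rwa [hη, topValue_half_one_sub_sq ht.ne']
  · refine (kinkValue_le_chord hk hkt hb hβ₀ hβ₁ (he₀.trans he) hr₀ hr₁).trans
      (convex_le hr₀ hr₁ ?_ kink)
    simpa [kinkValue] using zero_le

lemma exists_slope {s t e : ℝ} (hs : 0 < s) (hs₁ : s < 1) (hst : s ≤ t) (ht : t ≤ 1)
    (he₀ : 0 ≤ e) (he : e ≤ (1 - t ^ 2) / 2) :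
    ∃ b, 0 ≤ b ∧ b ≤ 1 + t ^ 2 + e ∧ topValue t b e ≤ max 1 (profile s) ∧
      kinkValue (2 * s / (1 + s ^ 2)) t b e ≤ max 1 (profile s) := by
  have ht₀ : 0 < t := hs.trans_le hst
  have hk : 0 < 2 * s / (1 + s ^ 2) := by positivity
  have hkt := two_mul_div_one_add_sq_mul_lt_one hs hs₁ ht
  have top := profile_le_max hs hst
  -- The largest admissible slope `1 + t ^ 2 + e` can break `topValue t b 0 ≤ 1` for `t` near `1`.
  rcases le_total t (1 / 2) with low | high
  · refine ⟨1 + t ^ 2 + 1 * e, by positivity, by rw [one_mul],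
      topValue_le_and_kinkValue_le hk hkt ht₀ ht (by positivity) zero_le_one le_rfl ?_ he₀ he
        (le_max_left _ _) top (le_max_of_le_right ?_)⟩
    · calc (1 + t ^ 2) * t * (1 + t) ≤ (1 + (1 / 2) ^ 2) * (1 / 2) * (1 + 1 / 2) := by gcongr
        _ ≤ 1 := by norm_num
    · have endpoint : 1 + t ^ 2 + 1 * ((1 - t ^ 2) / 2) = (3 + t ^ 2) / 2 := by ring
      exact endpoint ▸ kinkValue_le_profile_of_le_half hs hst low
  · refine ⟨2 * (1 - t) + 0 * e, by linarith, by nlinarith,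
      topValue_le_and_kinkValue_le hk hkt ht₀ ht (by linarith) le_rfl zero_le_one ?_ he₀ he
        (le_max_left _ _) top ?_⟩
    · nlinarith [mul_nonneg ht₀.le (sq_nonneg t)]
    · rw [zero_mul, add_zero]
      rcases le_total (2 * s / (1 + s ^ 2)) (2 / 7) with small | large
      · exact le_max_of_le_right ((kinkValue_le_of_le_two_sevenths hk small high ht).trans
          (one_div_four_mul_add_half_le_profile hs hs₁.le))
      · refine le_max_of_le_left (kinkValue_le_one large ?_ high ht)
        simpa using two_mul_div_one_add_sq_mul_lt_one hs hs₁ le_rfl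

end Calculus

section Scaling

variable {k t b e : ℝ}

lemma pow_mul_topValue (hk : k ≠ 0) (ht : t ≠ 0) : k ^ 5 * topValue t b e =
    (k ^ 2) ^ 2 * (k * t) + ((k * t) ^ 2 + k ^ 2 * e) ^ 2 / (k * t) * (k ^ 2 * e)
      + k ^ 2 * b * (k * t * (k ^ 2 - (k * t) ^ 2 - 2 * (k ^ 2 * e))) := by
  unfold topValue; field_simp

lemma pow_mul_kinkValue (hk : k ≠ 0) (hkt : k * t < 1) : k ^ 5 * kinkValue k t b e =
    (k ^ 2) ^ 2 * (k * t)
      + (k ^ 2 * e / (1 - k * t) - k ^ 2 * b * (k * t - k ^ 2 * e / (1 - k * t))) * (k ^ 2 * e)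
      + k ^ 2 * b * (k * t * (k ^ 2 - (k * t) ^ 2 - 2 * (k ^ 2 * e))) := by
  have hn : 1 - k * t ≠ 0 := by linarith
  unfold kinkValue
  generalize 1 - k * t = n at hn ⊢
  field_simp

lemma exists_majorant {s k u E : ℝ} (hs : 0 < s) (hs₁ : s < 1) (hk : k = 2 * s / (1 + s ^ 2))
    (hsu : k * s ≤ u) (huk : u ≤ k) (hE : 0 ≤ E) (hE' : 2 * E ≤ k ^ 2 - u ^ 2) :
    ∃ A B, 0 ≤ B ∧ B ≤ k ^ 2 + u ^ 2 + E ∧ (u ^ 2 + E) ^ 2 / u ≤ A ∧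
      E / (1 - u) - B * (u - E / (1 - u)) ≤ A ∧
      (k ^ 2) ^ 2 * u + A * E + B * (u * (k ^ 2 - u ^ 2 - 2 * E)) ≤ k ^ 5 * max 1 (profile s) := by
  have hk₀ : 0 < k := by rw [hk]; positivity
  obtain ⟨t, rfl⟩ : ∃ t, u = k * t := ⟨u / k, (mul_div_cancel₀ u hk₀.ne').symm⟩
  obtain ⟨e, rfl⟩ : ∃ e, E = k ^ 2 * e := ⟨E / k ^ 2, (mul_div_cancel₀ E (by positivity)).symm⟩
  have hst : s ≤ t := le_of_mul_le_mul_left hsu hk₀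
  have ht₁ : t ≤ 1 := le_of_mul_le_mul_left (by rwa [mul_one]) hk₀
  have hkt : k * t < 1 := hk ▸ two_mul_div_one_add_sq_mul_lt_one hs hs₁ ht₁
  have he₀ : 0 ≤ e := nonneg_of_mul_nonneg_right hE (by positivity)
  have he : e ≤ (1 - t ^ 2) / 2 :=
    le_of_mul_le_mul_left (by linarith : k ^ 2 * e ≤ k ^ 2 * _) (by positivity)
  obtain ⟨b, hb₀, hb, top, kink⟩ := exists_slope hs hs₁ hst ht₁ he₀ he
  rw [← hk] at kink
  have top_le := mul_le_mul_of_nonneg_left top (by positivity : 0 ≤ k ^ 5)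
  have kink_le := mul_le_mul_of_nonneg_left kink (by positivity : 0 ≤ k ^ 5)
  refine ⟨max _ _, k ^ 2 * b, by positivity, ?_, le_max_left _ _, le_max_right _ _, ?_⟩
  · linarith [mul_le_mul_of_nonneg_left hb (by positivity : 0 ≤ k ^ 2)]
  · rw [max_mul_of_nonneg _ _ hE, ← max_add_add_left, ← max_add_add_right,
      ← pow_mul_topValue hk₀.ne' (hs.trans_le hst).ne', ← pow_mul_kinkValue hk₀.ne' hkt]
    exact max_le top_le kink_le

lemma exists_sqrt_eq {c : ℝ} (hc₀ : 0 < c) (hc₁ : c < 1) :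
    ∃ s, 0 < s ∧ s < 1 ∧ √c = 2 * s / (1 + s ^ 2) ∧ √(1 - c) = (1 - s ^ 2) / (1 + s ^ 2) := by
  have hk := Real.sqrt_pos.2 hc₀
  have hr := Real.sqrt_pos.2 (sub_pos.2 hc₁)
  have pythagoras : √c ^ 2 + √(1 - c) ^ 2 = 1 := by
    rw [Real.sq_sqrt hc₀.le, Real.sq_sqrt (sub_pos.2 hc₁).le, add_sub_cancel]
  set k := √c
  set r := √(1 - c)
  have hr₁ : r < 1 := by nlinarith
  have one_add_sq : 1 + ((1 - r) / k) ^ 2 = 2 * (1 - r) / k ^ 2 := by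
    field_simp
    linarith
  have hn : 1 - r ≠ 0 := by linarith
  refine ⟨(1 - r) / k, div_pos (by linarith) hk, ?_, ?_, ?_⟩
  · rw [div_lt_one hk]
    nlinarith
  · rw [one_add_sq]
    field_simp
  · rw [one_add_sq, eq_div_iff (by positivity)]
    field_simp
    linear_combination -pythagoras

lemma pow_mul_profile {s : ℝ} (hs : s ≠ 0) :
    (2 * s / (1 + s ^ 2)) ^ 5 * profile s = (1 - (1 - s ^ 2) / (1 + s ^ 2)) ^ 2 *
      (((2 * s / (1 + s ^ 2)) ^ 2 + 1) * ((1 - s ^ 2) / (1 + s ^ 2))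
        + (2 * s / (1 + s ^ 2)) ^ 2) := by
  unfold profile; field_simp; ring

end Scaling

/-- A step graphon with parts indexed by `ι`: `weight i` is the length of the part `i`, and
`adj i j` is the value on the rectangle of the parts `i` and `j`. -/
structure StepGraphon (ι : Type*) [Fintype ι] where
  weight : ι → ℝ
  adj : ι → ι → ℝ
  weight_nonneg : ∀ i, 0 ≤ weight i
  sum_weight : ∑ i, weight i = 1
  adj_nonneg : ∀ i j, 0 ≤ adj i j
  adj_le_one : ∀ i j, adj i j ≤ 1
  adj_symm : ∀ i j, adj i j = adj j i

namespace StepGraphon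

variable {ι : Type*} [Fintype ι] (W : StepGraphon ι) {χ : ι → ℝ} {u : ℝ}

/-- The degree function `ℓ` on the part `i`. -/
noncomputable def degree (i : ι) : ℝ := ∑ j, W.weight j * W.adj i j

/-- The integral of the graphon, which is the `c` of the theorem. -/
noncomputable def density : ℝ := ∑ i, W.weight i * W.degree i

/-- The functional `S`. -/
noncomputable def energy : ℝ :=
  ∑ i, ∑ j, W.weight i * W.weight j *
    (W.degree i * W.degree j * min (W.degree i) (W.degree j))

lemma degree_nonneg (i : ι) : 0 ≤ W.degree i :=
  Finset.sum_nonneg fun j _ => mul_nonneg (W.weight_nonneg j) (W.adj_nonneg i j)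

lemma degree_le_one (i : ι) : W.degree i ≤ 1 :=
  W.sum_weight ▸ Finset.sum_le_sum fun j _ =>
    mul_le_of_le_one_right (W.weight_nonneg j) (W.adj_le_one i j)

lemma weight_mul_degree_nonneg (i : ι) : 0 ≤ W.weight i * W.degree i :=
  mul_nonneg (W.weight_nonneg i) (W.degree_nonneg i)

lemma energy_eq_integral :
    W.energy = ∫ t in (0 : ℝ)..1,
      superlevelSum (fun i => W.weight i * W.degree i) W.degree t ^ 2 := by
  rw [integral_superlevelSum_sq _ zero_le_one W.degree_le_one]
  refine Finset.sum_congr rfl fun i _ => Finset.sum_congr rfl fun j _ => ?_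
  rw [sub_zero, max_eq_left (le_min (W.degree_nonneg i) (W.degree_nonneg j))]
  ring

lemma density_nonneg : 0 ≤ W.density :=
  Finset.sum_nonneg fun i _ => W.weight_mul_degree_nonneg i

lemma density_le_one : W.density ≤ 1 :=
  W.sum_weight ▸ Finset.sum_le_sum fun i _ =>
    mul_le_of_le_one_right (W.weight_nonneg i) (W.degree_le_one i)

lemma energy_le_density : W.energy ≤ W.density := by
  calc W.energy ≤ ∑ i, ∑ j, W.weight i * W.degree i * W.weight j := by
        refine Finset.sum_le_sum fun i _ => Finset.sum_le_sum fun j _ => ?_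
        have : W.degree j * min (W.degree i) (W.degree j) ≤ 1 :=
          mul_le_one₀ (W.degree_le_one j) (le_min (W.degree_nonneg i) (W.degree_nonneg j))
            (min_le_of_left_le (W.degree_le_one i))
        linarith [mul_le_mul_of_nonneg_left this
          (mul_nonneg (W.weight_mul_degree_nonneg i) (W.weight_nonneg j))]
    _ = W.density := by rw [← Finset.sum_mul_sum, W.sum_weight, mul_one, density]

variable {W}

lemma degree_sub_le (h : IsTopFraction W.weight W.degree u χ) (i : ι) :
    W.degree i - u ≤ ∑ j, W.weight j * (1 - χ j) * W.adj i j := by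
  rw [degree, ← h.sum_eq, ← Finset.sum_sub_distrib]
  refine Finset.sum_le_sum fun j _ => ?_
  linarith [mul_le_mul_of_nonneg_left (W.adj_le_one i j)
    (mul_nonneg (W.weight_nonneg j) (h.nonneg j))]

lemma sum_adj_mul_sub_rank_le {j : ι} (hj : W.degree j ≤ u) :
    ∑ i with u < W.degree i, W.weight i * W.adj i j * (2 * u - rank W.weight W.degree i) ≤
      2 * u * W.degree j - W.degree j ^ 2 := by
  have nonneg (i : ι) : 0 ≤ W.weight i * W.adj i j :=
    mul_nonneg (W.weight_nonneg i) (W.adj_nonneg i j)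
  set β := ∑ i with u < W.degree i, W.weight i * W.adj i j with hβ
  have β_le : β ≤ W.degree j := by
    simp only [degree, W.adj_symm j]
    exact Finset.sum_le_univ_sum_of_nonneg nonneg
  have sq_le := sq_sum_le_sum_mul_rank (s := Finset.univ.filter fun i => u < W.degree i) nonneg
    (fun i => mul_le_of_le_one_right (W.weight_nonneg i) (W.adj_le_one i j)) W.degree
  calc _ = 2 * u * β
        - ∑ i with u < W.degree i, W.weight i * W.adj i j * rank W.weight W.degree i := by
        rw [hβ, Finset.mul_sum, ← Finset.sum_sub_distrib]
        exact Finset.sum_congr rfl fun i _ => by ring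
    _ ≤ 2 * u * β - β ^ 2 := sub_le_sub_left sq_le _
    _ ≤ 2 * u * W.degree j - W.degree j ^ 2 := by
        linarith [mul_nonneg (sub_nonneg.2 β_le) (by linarith : 0 ≤ 2 * u - W.degree j - β)]

lemma two_mul_excess_sub_pairExcess_le_sum (h : IsTopFraction W.weight W.degree u χ) :
    2 * u * excess W.weight W.degree u - pairExcess W.weight W.degree u ≤
      ∑ i with u < W.degree i, W.weight i * (2 * u - rank W.weight W.degree i) *
        ∑ j, W.weight j * (1 - χ j) * W.adj i j := by
  rw [pairExcess_eq_sum_mul_rank, excess, Finset.mul_sum, ← Finset.sum_sub_distrib,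
    Finset.sum_filter]
  refine Finset.sum_le_sum fun i _ => ?_
  split_ifs with hi
  · rw [max_eq_left (sub_nonneg.2 hi.le)]
    have := mul_nonneg (W.weight_nonneg i) (sub_nonneg.2 (h.rank_le W.weight_nonneg hi))
    linarith [mul_le_mul_of_nonneg_left (degree_sub_le h i) this]
  · simp [max_eq_right (sub_nonpos.2 (not_lt.1 hi))]

lemma two_mul_excess_sub_pairExcess_le (h : IsTopFraction W.weight W.degree u χ) :
    2 * u * excess W.weight W.degree u - pairExcess W.weight W.degree u ≤
      ∑ j, W.weight j * (1 - χ j) * (2 * u * W.degree j - W.degree j ^ 2) := by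
  refine (two_mul_excess_sub_pairExcess_le_sum h).trans ?_
  simp only [Finset.mul_sum]
  rw [Finset.sum_comm]
  refine Finset.sum_le_sum fun j _ => ?_
  have factor : ∑ i with u < W.degree i, W.weight i * (2 * u - rank W.weight W.degree i) *
      (W.weight j * (1 - χ j) * W.adj i j) = W.weight j * (1 - χ j) * ∑ i with u < W.degree i,
        W.weight i * W.adj i j * (2 * u - rank W.weight W.degree i) := by
    rw [Finset.mul_sum]
    exact Finset.sum_congr rfl fun i _ => by ring
  rw [factor]
  rcases lt_or_ge u (W.degree j) with hj | hj
  · simp [h.eq_one_of_lt j hj]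
  · exact mul_le_mul_of_nonneg_left (sum_adj_mul_sub_rank_le hj)
      (mul_nonneg (W.weight_nonneg j) (sub_nonneg.2 (h.le_one j)))

lemma two_mul_excess_le (h : IsTopFraction W.weight W.degree u χ) :
    2 * excess W.weight W.degree u ≤ W.density - u ^ 2 := by
  have edge_le (i j : ι) : W.weight i * W.weight j * W.adj i j * (χ i + χ j - 1) ≤
      W.weight i * χ i * (W.weight j * χ j) := by
    have : W.adj i j * (χ i + χ j - 1) ≤ χ i * χ j := by
      linarith [mul_nonneg (sub_nonneg.2 (W.adj_le_one i j))
          (mul_nonneg (h.nonneg i) (h.nonneg j)),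
        mul_nonneg (W.adj_nonneg i j)
          (mul_nonneg (sub_nonneg.2 (h.le_one i)) (sub_nonneg.2 (h.le_one j)))]
    linarith [mul_le_mul_of_nonneg_left this
      (mul_nonneg (W.weight_nonneg i) (W.weight_nonneg j))]
  have : 2 * (u ^ 2 + excess W.weight W.degree u) - W.density ≤ u ^ 2 :=
    calc _ = ∑ i, ∑ j, W.weight i * W.weight j * W.adj i j * (2 * χ i - 1) := by
          rw [← h.sum_mul_mul, density, Finset.mul_sum, ← Finset.sum_sub_distrib]
          refine Finset.sum_congr rfl fun i _ => ?_
          simp only [degree, Finset.mul_sum, ← Finset.sum_sub_distrib]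
          exact Finset.sum_congr rfl fun j _ => by ring
      _ = ∑ i, ∑ j, W.weight i * W.weight j * W.adj i j * (χ i + χ j - 1) :=
          sum_sum_eq_of_add_swap_eq fun i j => by rw [W.adj_symm j i]; ring
      _ ≤ ∑ i, ∑ j, W.weight i * χ i * (W.weight j * χ j) :=
          Finset.sum_le_sum fun i _ => Finset.sum_le_sum fun j _ => edge_le i j
      _ = u ^ 2 := by rw [← Finset.sum_mul_sum, h.sum_eq, sq]
  linarith

lemma energy_le_of_isTopFraction {A B : ℝ} (h : IsTopFraction W.weight W.degree u χ) (hu : 0 < u)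
    (hu₁ : u < 1) (hB : 0 ≤ B) (hB' : B ≤ W.density + u ^ 2 + excess W.weight W.degree u)
    (top : (u ^ 2 + excess W.weight W.degree u) ^ 2 / u ≤ A)
    (kink : excess W.weight W.degree u / (1 - u)
      - B * (u - excess W.weight W.degree u / (1 - u)) ≤ A) :
    W.energy ≤ W.density ^ 2 * u + A * excess W.weight W.degree u
      + B * (u * (W.density - u ^ 2 - 2 * excess W.weight W.degree u)) := by
  have secant : B ≤ W.density + superlevelSum (fun i => W.weight i * W.degree i) W.degree u := by
    linarith [h.sq_add_excess_le_superlevelSum W.weight_nonneg W.degree_nonneg]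
  have low := integral_superlevelSum_sq_le W.weight_mul_degree_nonneg W.degree_nonneg hu.le secant
  have high := h.integral_superlevelSum_sq_le W.weight_nonneg W.degree_nonneg W.degree_le_one hu
    hu₁ hB top kink
  have tradeoff := mul_le_mul_of_nonneg_left (two_mul_excess_sub_pairExcess_le h) hB
  rw [h.sum_one_sub_mul_two_mul_sub_sq] at tradeoff
  rw [energy_eq_integral, ← intervalIntegral.integral_add_adjacent_intervals
    (intervalIntegrable_superlevelSum_sq _ _ 0 u) (intervalIntegrable_superlevelSum_sq _ _ u 1)]
  simp only [density] at *
  linarith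

lemma sq_le_density (h : IsTopFraction W.weight W.degree u χ) : u ^ 2 ≤ W.density := by
  linarith [two_mul_excess_le h, excess_nonneg W.weight_nonneg W.degree u]

lemma one_sub_sq_le (h : IsTopFraction W.weight W.degree u χ) : (1 - u) ^ 2 ≤ 1 - W.density := by
  have := h.sum_mul_sub_le W.weight_nonneg
  rw [W.sum_weight] at this
  simp only [density]
  linarith [h.excess_le W.weight_nonneg W.degree_le_one]

lemma energy_le_pow_mul_max {s : ℝ} (hs : 0 < s) (hs₁ : s < 1)
    (hk : √W.density = 2 * s / (1 + s ^ 2))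
    (hr : √(1 - W.density) = (1 - s ^ 2) / (1 + s ^ 2)) :
    W.energy ≤ √W.density ^ 5 * max 1 (profile s) := by
  have : Nonempty ι := by
    by_contra hι
    rw [not_nonempty_iff] at hι
    simpa using W.sum_weight
  obtain ⟨u, χ, h⟩ := exists_isTopFraction W.weight_nonneg W.degree_nonneg
  have hk₀ : 0 < √W.density := by rw [hk]; positivity
  have huk : u ≤ √W.density := Real.le_sqrt_of_sq_le (sq_le_density h)
  have hsu : √W.density * s ≤ u := by
    have : 1 - u ≤ (1 - s ^ 2) / (1 + s ^ 2) := hr ▸ Real.le_sqrt_of_sq_le (one_sub_sq_le h)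
    have : 2 * s / (1 + s ^ 2) * s = 1 - (1 - s ^ 2) / (1 + s ^ 2) := by field_simp; ring
    rw [hk]
    linarith
  have hu₁ : u < 1 := by
    have := two_mul_div_one_add_sq_mul_lt_one hs hs₁ le_rfl
    linarith
  have density_eq := (Real.sq_sqrt W.density_nonneg).symm
  obtain ⟨A, B, hB, hB', top, kink, hAB⟩ := exists_majorant hs hs₁ hk hsu huk
    (excess_nonneg W.weight_nonneg W.degree u) (density_eq ▸ two_mul_excess_le h)
  rw [← density_eq] at hB' hAB
  exact (energy_le_of_isTopFraction h ((mul_pos hk₀ hs).trans_le hsu) hu₁ hB hB' top kink).trans hAB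

variable (W)

lemma energy_le : W.energy ≤
    max ((1 - √(1 - W.density)) ^ 2 * ((W.density + 1) * √(1 - W.density) + W.density))
      (W.density ^ ((5 : ℝ) / 2)) := by
  rcases W.density_nonneg.eq_or_lt with h₀ | h₀
  · refine W.energy_le_density.trans (le_max_of_le_right ?_)
    rw [← h₀, Real.zero_rpow (by norm_num)]
  rcases W.density_le_one.eq_or_lt with h₁ | h₁
  · refine W.energy_le_density.trans (le_max_of_le_right ?_)
    rw [h₁, Real.one_rpow]
  obtain ⟨s, hs, hs₁, hk, hr⟩ := exists_sqrt_eq h₀ h₁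
  have pow_eq : √W.density ^ 5 = W.density ^ ((5 : ℝ) / 2) := by
    rw [Real.sqrt_eq_rpow, ← Real.rpow_natCast, ← Real.rpow_mul h₀.le]
    norm_num
  calc W.energy ≤ √W.density ^ 5 * max 1 (profile s) := energy_le_pow_mul_max hs hs₁ hk hr
    _ = max (√W.density ^ 5 * profile s) (√W.density ^ 5) := by
        rw [mul_max_of_nonneg _ _ (by positivity), mul_one, max_comm]
    _ = _ := by
        rw [← pow_eq, hk, pow_mul_profile hs.ne', ← hr, ← hk, Real.sq_sqrt h₀.le]

end StepGraphon

section Reduction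

lemma integral_eq_sum_of_eq_on_Ico {E : Type*} [NormedAddCommGroup E] [NormedSpace ℝ E]
    [CompleteSpace E] {n : ℕ} {q : ℕ → ℝ} {f : ℝ → E} {v : Fin n → E}
    (hq : ∀ i : Fin n, q i ≤ q (i + 1))
    (hf : ∀ i : Fin n, ∀ x ∈ Set.Ico (q i) (q (i + 1)), f x = v i) :
    ∫ x in q 0..q n, f x = ∑ i : Fin n, (q (i + 1) - q i) • v i := by
  have eqOn (i : Fin n) : Set.EqOn f (fun _ => v i) (Set.Ioo (q i) (q (i + 1))) :=
    fun x hx => hf i x (Set.Ioo_subset_Ico_self hx)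
  have integrable (k : ℕ) (hk : k < n) : IntervalIntegrable f volume (q k) (q (k + 1)) := by
    rw [intervalIntegrable_iff_integrableOn_Ioo_of_le (hq ⟨k, hk⟩)]
    exact (integrableOn_const (by simp)).congr_fun (eqOn ⟨k, hk⟩).symm measurableSet_Ioo
  rw [← intervalIntegral.sum_integral_adjacent_intervals integrable, Finset.sum_range]
  refine Finset.sum_congr rfl fun i _ => ?_
  rw [intervalIntegral.integral_of_le (hq i), integral_Ioc_eq_integral_Ioo,
    setIntegral_congr_fun measurableSet_Ioo (eqOn i), setIntegral_const, Real.volume_real_Ioo,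
    max_eq_left (sub_nonneg.2 (hq i))]

variable {K : ℕ} {W : StepGraphon (Fin K)} {q : ℕ → ℝ} {A : ℝ → ℝ → ℝ}

/-- `A` takes the value `W.adj i j` on the product of the `i`-th and the `j`-th interval of the
partition `0 = q 0 ≤ ⋯ ≤ q K = 1`, and `W.weight i` is the length of the `i`-th interval. -/
structure StepGraphon.Represents (W : StepGraphon (Fin K)) (q : ℕ → ℝ) (A : ℝ → ℝ → ℝ) :
    Prop where
  zero : q 0 = 0
  last : q K = 1
  weight_eq : ∀ i, W.weight i = q (i + 1) - q i
  adj_eq : ∀ i : Fin K, ∀ x ∈ Set.Ico (q i) (q (i + 1)),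
    ∀ j : Fin K, ∀ y ∈ Set.Ico (q j) (q (j + 1)), A x y = W.adj i j

namespace StepGraphon.Represents

lemma integral_eq_sum (h : W.Represents q A) {f : ℝ → ℝ} {v : Fin K → ℝ}
    (hf : ∀ i : Fin K, ∀ x ∈ Set.Ico (q i) (q (i + 1)), f x = v i) :
    ∫ x in (0 : ℝ)..1, f x = ∑ i, W.weight i * v i := by
  have le_succ (i : Fin K) : q i ≤ q (i + 1) := sub_nonneg.1 (h.weight_eq i ▸ W.weight_nonneg i)
  simpa only [h.zero, h.last, h.weight_eq, smul_eq_mul]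
    using integral_eq_sum_of_eq_on_Ico le_succ hf

lemma ell_eq_degree (h : W.Represents q A) (i : Fin K) (x : ℝ)
    (hx : x ∈ Set.Ico (q i) (q (i + 1))) : ell A x = W.degree i :=
  h.integral_eq_sum (h.adj_eq i x hx)

lemma density_eq (h : W.Represents q A) :
    W.density = ∫ x in (0 : ℝ)..1, ∫ y in (0 : ℝ)..1, A x y :=
  (h.integral_eq_sum h.ell_eq_degree).symm

lemma energy_eq (h : W.Represents q A) : W.energy = Sfun A := by
  simp only [energy, mul_assoc, ← Finset.mul_sum]
  refine (h.integral_eq_sum fun i x hx => h.integral_eq_sum fun j y hy => ?_).symm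
  rw [h.ell_eq_degree i x hx, h.ell_eq_degree j y hy, mul_assoc]

end StepGraphon.Represents

lemma exists_represents
    (hA01 : ∀ x ∈ Set.Ico (0 : ℝ) 1, ∀ y ∈ Set.Ico (0 : ℝ) 1, A x y ∈ Set.Icc (0 : ℝ) 1)
    (hsym : ∀ x ∈ Set.Ico (0 : ℝ) 1, ∀ y ∈ Set.Ico (0 : ℝ) 1, A x y = A y x)
    (hq0 : q 0 = 0) (hqK : q K = 1) (hqmono : ∀ i < K, q i < q (i + 1))
    (hstep : ∀ i < K, ∀ j < K,
      ∀ x₁ ∈ Set.Ico (q i) (q (i + 1)), ∀ x₂ ∈ Set.Ico (q i) (q (i + 1)),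
      ∀ y₁ ∈ Set.Ico (q j) (q (j + 1)), ∀ y₂ ∈ Set.Ico (q j) (q (j + 1)),
      A x₁ y₁ = A x₂ y₂) :
    ∃ W : StepGraphon (Fin K), W.Represents q A := by
  have strictMono : StrictMonoOn q (Set.Iic K) :=
    strictMonoOn_of_lt_succ Set.ordConnected_Iic fun i _ _ hi => hqmono i hi
  have mem_Ico (i : Fin K) : q i ∈ Set.Ico (0 : ℝ) 1 :=
    ⟨hq0 ▸ strictMono.monotoneOn (Nat.zero_le K) i.2.le (Nat.zero_le i),
      hqK ▸ strictMono i.2.le Set.self_mem_Iic i.2⟩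
  have left_mem (i : Fin K) : q i ∈ Set.Ico (q i) (q (i + 1)) :=
    Set.left_mem_Ico.2 (hqmono i i.2)
  exact ⟨{
    weight := fun i => q (i + 1) - q i
    adj := fun i j => A (q i) (q j)
    weight_nonneg := fun i => sub_nonneg.2 (hqmono i i.2).le
    sum_weight := by
      rw [← Finset.sum_range fun i => q (i + 1) - q i, Finset.sum_range_sub, hq0, hqK, sub_zero]
    adj_nonneg := fun i j => (hA01 _ (mem_Ico i) _ (mem_Ico j)).1
    adj_le_one := fun i j => (hA01 _ (mem_Ico i) _ (mem_Ico j)).2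
    adj_symm := fun i j => hsym _ (mem_Ico i) _ (mem_Ico j) }, {
    zero := hq0
    last := hqK
    weight_eq := fun _ => rfl
    adj_eq := fun i x hx j y hy =>
      hstep i i.2 j j.2 x hx _ (left_mem i) y hy _ (left_mem j) }⟩

end Reduction

theorem step_graphon_upper_bound (c : ℝ) (hc0 : 0 ≤ c) (hc1 : c ≤ 1)
    (K : ℕ) (hK : 0 < K) (A : ℝ → ℝ → ℝ)
    (hA01 : ∀ x ∈ Set.Ico (0:ℝ) 1, ∀ y ∈ Set.Ico (0:ℝ) 1, A x y ∈ Set.Icc (0:ℝ) 1)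
    (hsym : ∀ x ∈ Set.Ico (0:ℝ) 1, ∀ y ∈ Set.Ico (0:ℝ) 1, A x y = A y x)
    (hint : (∫ x in (0:ℝ)..1, ∫ y in (0:ℝ)..1, A x y) = c)
    (q : ℕ → ℝ) (hq0 : q 0 = 0) (hqK : q K = 1)
    (hqmono : ∀ i < K, q i < q (i + 1))
    (hstep : ∀ i < K, ∀ j < K,
      ∀ x₁ ∈ Set.Ico (q i) (q (i + 1)), ∀ x₂ ∈ Set.Ico (q i) (q (i + 1)),
      ∀ y₁ ∈ Set.Ico (q j) (q (j + 1)), ∀ y₂ ∈ Set.Ico (q j) (q (j + 1)),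
      A x₁ y₁ = A x₂ y₂) :
    Sfun A ≤ max ((1 - Real.sqrt (1 - c)) ^ 2 * ((c + 1) * Real.sqrt (1 - c) + c))
      (c ^ ((5 : ℝ) / 2)) := by
  obtain ⟨W, hW⟩ := exists_represents hA01 hsym hq0 hqK hqmono hstep
  rw [← hW.energy_eq, ← hint, ← hW.density_eq]
  exact W.energy_le
end
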